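/- arXiv:1403.2423 — 9 statements merged into one kernel-verified Lean document; each statement's English description precedes it below -/
import Mathlib

section
/- Let f ∈ ℂ[x₁,…,xₙ] be a polynomial all of whose terms have degree ≥ 2 (so its image lies in m², where m is the maximal ideal of ℂ⟦x₁,…,xₙ⟧). Let J_f ⊂ ℂ⟦x₁,…,xₙ⟧ be the ideal generated by the images of the partial derivatives ∂f/∂x₁, …, ∂f/∂xₙ. Then for any g ∈ ℂ⟦x₁,…,xₙ⟧ such that f − g ∈ m·J_f², there is a ℂ-algebra isomorphism ℂ⟦x₁,…,xₙ⟧/(f) ≅ ℂ⟦x₁,…,xₙ⟧/(g). -/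
/-!
The isomorphism comes from a change of coordinates `xᵢ ↦ xᵢ + hᵢ` that carries `f` to `g`.
Write `fᵢ = ∂f/∂xᵢ` and `g - f = ∑ bₖₗ fₖ fₗ` with `bₖₗ ∈ m`, and look for `hᵢ = ∑ⱼ aᵢⱼ fⱼ` with
`aᵢⱼ ∈ m`. A second-order Taylor expansion (`exists_taylor`) reads
`f(x + h) = f + ∑ hᵢ fᵢ + ∑ hᵢ hⱼ Eᵢⱼ(h)`, so `f(x + h) = g` holds as soon as
`aₖₗ + ∑ᵢⱼ aᵢₖ aⱼₗ Eᵢⱼ(h) = bₖₗ` for all `k, l`. The sum is quadratic in `a`, hence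
`a ↦ b - (quadratic part)` is contracting for the `m`-adic topology on tuples with entries in `m`,
and completeness provides a solution (`exists_fixedPoint`).

Since `f ∈ m²`, the `fⱼ` lie in `m` and the `hᵢ` in `m²`. The substitution `φ : xᵢ ↦ xᵢ + hᵢ` then
satisfies `φ p - p ∈ m ^ (k + 1)` for `p ∈ m ^ k`, which makes it bijective, again by the fixed
point lemma (`bijective_of_sub_mem`).
-/

open MvPowerSeries

/-! ### Fixed points in complete rings -/

/-- A contraction principle: a self-map of `ι → R` that preserves tuples with entries in `I ⊇ m` and
improves `m`-adic congruences between such tuples by one order has a fixed point among them. -/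
lemma exists_fixedPoint {R ι : Type*} [CommRing R] (m I : Ideal R) [IsAdicComplete m R]
    (hmI : m ≤ I) (F : (ι → R) → ι → R)
    (hF : ∀ a, (∀ i, a i ∈ I) → ∀ i, F a i ∈ I)
    (hc : ∀ k a b, (∀ i, a i ∈ I) → (∀ i, b i ∈ I) → (∀ i, a i - b i ∈ m ^ k) →
      ∀ i, F a i - F b i ∈ m ^ (k + 1)) :
    ∃ a, (∀ i, a i ∈ I) ∧ F a = a := by
  set s : ℕ → ι → R := fun k => F^[k] 0 with hs
  have hs1 : ∀ k, s (k + 1) = F (s k) := fun k => Function.iterate_succ_apply' F k 0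
  have hsI : ∀ k i, s k i ∈ I := by
    intro k
    induction k with
    | zero => intro i; simp [hs]
    | succ k ih => rw [hs1]; exact hF _ ih
  have hstep : ∀ k i, s (k + 1) i - s k i ∈ m ^ k := by
    intro k
    induction k with
    | zero => intro i; simp
    | succ k ih =>
      rw [hs1 (k + 1)]
      nth_rewrite 2 [hs1 k]
      exact hc k _ _ (hsI _) (hsI _) ih
  have hcauchy : ∀ k l, k ≤ l → ∀ i, s l i - s k i ∈ m ^ k := by
    intro k l hkl i
    induction l, hkl using Nat.le_induction with
    | base => simp
    | succ l hkl ih =>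
      have := add_mem (Ideal.pow_le_pow_right hkl (hstep l i)) ih
      rwa [sub_add_sub_cancel] at this
  have hlim : ∀ i, ∃ L, ∀ k, s k i - L ∈ m ^ k := by
    intro i
    obtain ⟨L, hL⟩ := IsPrecomplete.prec' (I := m) (fun k => s k i) (by
      intro k l hkl
      rw [SModEq.comm, SModEq.sub_mem]
      simpa using hcauchy k l hkl i)
    exact ⟨L, fun k => by simpa [SModEq.sub_mem] using hL k⟩
  choose L hL using hlim
  have hLI : ∀ i, L i ∈ I := by
    intro i
    have h1 : s 1 i - L i ∈ I := hmI (by simpa using hL i 1)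
    simpa using sub_mem (hsI 1 i) h1
  refine ⟨L, hLI, funext fun i => ?_⟩
  rw [← sub_eq_zero]
  refine IsHausdorff.haus' (I := m) _ fun k => ?_
  rw [SModEq.sub_mem, sub_zero, smul_eq_mul, Ideal.mul_top]
  have h1 := hc k _ _ (hsI k) hLI (fun j => hL j k) i
  rw [← hs1] at h1
  have h2 := sub_mem (hL i (k + 1)) h1
  rw [sub_sub_sub_cancel_left] at h2
  exact Ideal.pow_le_pow_right k.le_succ h2

/-- A ring endomorphism that induces the identity on every graded piece `m ^ k / m ^ (k + 1)` of a
complete ring is bijective: `φ q = p` says that `q` is fixed by `q ↦ p - (φ q - q)`. -/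
lemma bijective_of_sub_mem {R : Type*} [CommRing R] (m : Ideal R) [IsAdicComplete m R]
    (φ : R →+* R) (h : ∀ k, ∀ p ∈ m ^ k, φ p - p ∈ m ^ (k + 1)) : Function.Bijective φ := by
  constructor
  · rw [injective_iff_map_eq_zero]
    intro p hp
    have hk : ∀ k, p ∈ m ^ k := by
      intro k
      induction k with
      | zero => simp
      | succ k ih => simpa [hp] using h k p ih
    refine IsHausdorff.haus' (I := m) _ fun k => ?_
    rw [SModEq.sub_mem, sub_zero, smul_eq_mul, Ideal.mul_top]
    exact hk k
  · intro p
    obtain ⟨a, -, ha⟩ := exists_fixedPoint (ι := Unit) m ⊤ le_top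
      (fun a i => p - (φ (a i) - a i)) (fun _ _ _ => Submodule.mem_top) (by
        intro k a b _ _ hab i
        have := neg_mem (h k _ (hab i))
        rw [map_sub] at this
        convert this using 1
        ring)
    refine ⟨a (), ?_⟩
    have := congrFun ha ()
    linear_combination -this

/-- If a ring endomorphism moves every element by an element of `m`, and every element of `m` by an
element of `m ^ 2`, then it induces the identity on all `m ^ k / m ^ (k + 1)`. -/
lemma sub_mem_pow_succ {R : Type*} [CommRing R] (m : Ideal R) (φ : R →+* R)
    (h0 : ∀ p, φ p - p ∈ m) (h1 : ∀ p ∈ m, φ p - p ∈ m ^ 2) (k : ℕ) :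
    ∀ p ∈ m ^ k, φ p - p ∈ m ^ (k + 1) := by
  induction k with
  | zero => intro p _; simpa using h0 p
  | succ k ih =>
    intro p hp
    rw [pow_succ] at hp
    induction hp using Submodule.mul_induction_on' with
    | mem_mul_mem a ha b hb =>
      have hb' : φ b ∈ m := by simpa using add_mem (h0 b) hb
      have e : φ (a * b) - a * b = (φ a - a) * φ b + a * (φ b - b) := by
        rw [map_mul]; ring
      rw [e]
      refine add_mem ?_ ?_
      · rw [pow_succ m (k + 1)]
        exact Ideal.mul_mem_mul (ih a ha) hb'
      · rw [show k + 1 + 1 = k + 2 from rfl, pow_add]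
        exact Ideal.mul_mem_mul ha (h1 b hb)
    | add a _ b _ ha hb =>
      rw [map_add, add_sub_add_comm]
      exact add_mem ha hb

/-! ### Taylor expansion -/

/-- Second-order Taylor expansion of a polynomial around a point `x` of an algebra. The remainder is
`∑ hᵢ hⱼ Eᵢⱼ(h)` with coefficients polynomial in the increment `h`. -/
lemma exists_taylor {K S σ : Type*} [CommRing K] [CommRing S] [Algebra K S] [Fintype σ]
    (x : σ → S) (f : MvPolynomial σ K) :
    ∃ E : σ → σ → MvPolynomial σ S, ∀ h : σ → S,
      MvPolynomial.aeval (x + h) f = MvPolynomial.aeval x f +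
        ∑ i, h i * MvPolynomial.aeval x (MvPolynomial.pderiv i f) +
        ∑ i, ∑ j, h i * h j * MvPolynomial.eval h (E i j) := by
  classical
  induction f using MvPolynomial.induction_on with
  | C c => exact ⟨0, fun h => by simp⟩
  | add p q hp hq =>
    obtain ⟨E, hE⟩ := hp
    obtain ⟨E', hE'⟩ := hq
    refine ⟨E + E', fun h => ?_⟩
    simp only [map_add, hE, hE', Pi.add_apply, mul_add, Finset.sum_add_distrib]
    ring
  | mul_X p k hp =>
    obtain ⟨E, hE⟩ := hp
    refine ⟨fun i j => (if j = k then
      MvPolynomial.C (MvPolynomial.aeval x (MvPolynomial.pderiv i p)) else 0) +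
        E i j * (MvPolynomial.C (x k) + MvPolynomial.X k), fun h => ?_⟩
    have e1 : ∀ i, MvPolynomial.aeval x (MvPolynomial.pderiv i (p * MvPolynomial.X k)) =
        (if k = i then MvPolynomial.aeval x p else 0) +
          MvPolynomial.aeval x (MvPolynomial.pderiv i p) * x k := by
      intro i
      rw [Derivation.leibniz, MvPolynomial.pderiv_X]
      by_cases hik : k = i
      · subst hik; simp; ring
      · simp [hik]; ring
    have e2 : ∀ i j, MvPolynomial.eval h ((if j = k then
        MvPolynomial.C (MvPolynomial.aeval x (MvPolynomial.pderiv i p)) else 0) +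
        E i j * (MvPolynomial.C (x k) + MvPolynomial.X k)) =
        (if j = k then MvPolynomial.aeval x (MvPolynomial.pderiv i p) else 0) +
          MvPolynomial.eval h (E i j) * (x k + h k) := by
      intro i j
      rw [map_add, map_mul, map_add, MvPolynomial.eval_C, MvPolynomial.eval_X, apply_ite
        (MvPolynomial.eval h), MvPolynomial.eval_C, map_zero]
    simp only [e2]
    simp only [e1, map_mul, MvPolynomial.aeval_X, hE, Pi.add_apply, mul_add,
      Finset.sum_add_distrib, mul_ite, mul_zero, Finset.sum_ite_eq, Finset.sum_ite_eq',
      Finset.mem_univ, if_true, ← mul_assoc, ← Finset.sum_mul, add_mul]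
    have e3 : ∑ i, h i * h k * MvPolynomial.aeval x (MvPolynomial.pderiv i p) =
        (∑ i, h i * MvPolynomial.aeval x (MvPolynomial.pderiv i p)) * h k := by
      rw [Finset.sum_mul]
      exact Finset.sum_congr rfl fun i _ => by ring
    rw [e3]
    ring

lemma eval_sub_eval_mem {S σ : Type*} [CommRing S] (I : Ideal S) (p : MvPolynomial σ S)
    {u v : σ → S} (h : ∀ i, u i - v i ∈ I) :
    MvPolynomial.eval u p - MvPolynomial.eval v p ∈ I := by
  have e : (Ideal.Quotient.mk I : S → S ⧸ I) ∘ u = Ideal.Quotient.mk I ∘ v :=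
    funext fun i => Ideal.Quotient.eq.mpr (h i)
  rw [← Ideal.Quotient.eq, MvPolynomial.eval₂_comp, MvPolynomial.eval₂_comp, e]

/-! ### The maximal ideal of the power series ring -/

/-- A power series without constant term is `∑ Xᵢ qᵢ`, where `qᵢ` collects the monomials whose first
variable is `Xᵢ`. -/
lemma mem_span_X_of_constantCoeff {n : ℕ} {K : Type*} [CommRing K] (p : MvPowerSeries (Fin n) K)
    (hp : constantCoeff p = 0) :
    p ∈ Ideal.span (Set.range (X : Fin n → MvPowerSeries (Fin n) K)) := by
  classical
  let q : Fin n → MvPowerSeries (Fin n) K := fun i d =>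
    if ∀ j < i, d j = 0 then coeff (d + Finsupp.single i 1) p else 0
  have hq : ∀ i d, coeff d (q i) =
      if ∀ j < i, d j = 0 then coeff (d + Finsupp.single i 1) p else 0 := fun _ _ => rfl
  have e : p = ∑ i, X i * q i := by
    ext d
    rw [map_sum]
    by_cases hd : d = 0
    · subst hd
      rw [Finset.sum_eq_zero fun i _ => coeff_zero_X_mul _ _]
      exact hp
    have hne : d.support.Nonempty := Finsupp.support_nonempty_iff.mpr hd
    set i₀ := d.support.min' hne with hi₀
    have hi₀m : d i₀ ≠ 0 := Finsupp.mem_support_iff.mp (d.support.min'_mem hne)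
    have hlt : ∀ j < i₀, d j = 0 := fun j hj => by
      by_contra hc
      exact absurd (d.support.min'_le j (Finsupp.mem_support_iff.mpr hc)) (not_le.mpr hj)
    rw [Finset.sum_eq_single i₀]
    · have hle : Finsupp.single i₀ 1 ≤ d := by
        rw [Finsupp.single_le_iff]; omega
      rw [X, coeff_monomial_mul, if_pos hle, one_mul, hq, if_pos, tsub_add_cancel_of_le hle]
      intro j hj
      simp [hlt j hj]
    · intro i _ hi
      rw [X, coeff_monomial_mul]
      split_ifs with hle
      · rw [one_mul, hq, if_neg]
        intro hall
        rw [Finsupp.single_le_iff] at hle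
        have hlti : i₀ < i := by
          refine lt_of_le_of_ne (not_lt.mp fun hlt' => ?_) (Ne.symm hi)
          have := hlt i hlt'
          omega
        have := hall i₀ hlti
        simp [hi] at this
        exact hi₀m this
      · rfl
    · simp
  rw [e]
  exact Ideal.sum_mem _ fun i _ =>
    Ideal.mul_mem_right _ _ (Ideal.subset_span (Set.mem_range_self i))

lemma mem_maximalIdeal_iff {n : ℕ} (p : MvPowerSeries (Fin n) ℂ) :
    p ∈ IsLocalRing.maximalIdeal (MvPowerSeries (Fin n) ℂ) ↔ constantCoeff p = 0 := by
  rw [IsLocalRing.mem_maximalIdeal, mem_nonunits_iff, MvPowerSeries.isUnit_iff_constantCoeff,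
    isUnit_iff_ne_zero, not_not]

lemma maximalIdeal_eq_span_X (n : ℕ) :
    IsLocalRing.maximalIdeal (MvPowerSeries (Fin n) ℂ) = Ideal.span (Set.range X) := by
  refine le_antisymm (fun p hp => mem_span_X_of_constantCoeff p ((mem_maximalIdeal_iff p).mp hp)) ?_
  rw [Ideal.span_le]
  rintro _ ⟨i, rfl⟩
  exact (mem_maximalIdeal_iff _).mpr (constantCoeff_X i)

instance isAdicComplete_maximalIdeal (n : ℕ) :
    IsAdicComplete (IsLocalRing.maximalIdeal (MvPowerSeries (Fin n) ℂ))
      (MvPowerSeries (Fin n) ℂ) := by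
  rw [maximalIdeal_eq_span_X]
  infer_instance

/-! ### Changes of coordinates -/

/-- A substitution tangent to the identity is an automorphism. -/
lemma bijective_substAlgHom {n : ℕ} (h : Fin n → MvPowerSeries (Fin n) ℂ)
    (hh : ∀ i, h i ∈ IsLocalRing.maximalIdeal (MvPowerSeries (Fin n) ℂ) ^ 2)
    (hs : HasSubst (X + h)) :
    Function.Bijective (substAlgHom (R := ℂ) hs) := by
  set m := IsLocalRing.maximalIdeal (MvPowerSeries (Fin n) ℂ) with hm
  let φ : MvPowerSeries (Fin n) ℂ →+* MvPowerSeries (Fin n) ℂ := (substAlgHom (R := ℂ) hs).toRingHom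
  have hφX : ∀ i, φ (X i) = X i + h i := fun i => substAlgHom_X hs i
  have hφC : ∀ c : ℂ, φ (C c) = C c := fun c => (substAlgHom (R := ℂ) hs).commutes c
  have hXm : ∀ i, (X i : MvPowerSeries (Fin n) ℂ) ∈ m := fun i =>
    (mem_maximalIdeal_iff _).mpr (constantCoeff_X i)
  have hφm : ∀ p ∈ m, φ p ∈ m := by
    intro p hp
    have : m ≤ m.comap φ := by
      conv_lhs => rw [hm, maximalIdeal_eq_span_X]
      rw [Ideal.span_le]
      rintro _ ⟨i, rfl⟩
      rw [SetLike.mem_coe, Ideal.mem_comap, hφX]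
      exact add_mem (hXm i) (Ideal.pow_le_self two_ne_zero (hh i))
    exact this hp
  have h0 : ∀ p, φ p - p ∈ m := by
    intro p
    have hp : p - C (constantCoeff p) ∈ m := (mem_maximalIdeal_iff _).mpr (by simp)
    have := sub_mem (hφm _ hp) hp
    rwa [map_sub, hφC, sub_sub_sub_cancel_right] at this
  refine bijective_of_sub_mem m φ (sub_mem_pow_succ m φ h0 fun p hp => ?_)
  rw [hm, maximalIdeal_eq_span_X] at hp
  induction hp using Submodule.span_induction with
  | mem x hx =>
    obtain ⟨i, rfl⟩ := hx
    rw [hφX, add_sub_cancel_left]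
    exact hh i
  | zero => simp
  | add a b _ _ ha hb =>
    rw [map_add, add_sub_add_comm]
    exact add_mem ha hb
  | smul r x hx ih =>
    have hxm : x ∈ m := by rw [hm, maximalIdeal_eq_span_X]; exact hx
    have e : φ (r • x) - r • x = (φ r) * (φ x - x) + (φ r - r) * x := by
      rw [smul_eq_mul, map_mul]; ring
    rw [e]
    refine add_mem (Ideal.mul_mem_left _ _ ih) ?_
    rw [pow_two]
    exact Ideal.mul_mem_mul (h0 r) hxm

/-! ### Ruiz's lemma -/

lemma pderiv_mem_maximalIdeal {n : ℕ} (f : MvPolynomial (Fin n) ℂ)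
    (hf : ∀ d ∈ f.support, 2 ≤ d.sum fun _ e => e) (i : Fin n) :
    ((MvPolynomial.pderiv i f : MvPolynomial (Fin n) ℂ) : MvPowerSeries (Fin n) ℂ) ∈
      IsLocalRing.maximalIdeal (MvPowerSeries (Fin n) ℂ) := by
  rw [mem_maximalIdeal_iff, ← coeff_zero_eq_constantCoeff_apply, ← pderiv_coe, coeff_pderiv,
    MvPolynomial.coeff_coe]
  have : MvPolynomial.coeff (0 + Finsupp.single i 1) f = 0 := by
    by_contra hc
    have := hf _ (MvPolynomial.mem_support_iff.mpr hc)
    simp at this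
  rw [this, zero_mul]

/-- Elements of `I * (span of the vᵢ)²` are quadratic forms in the `vᵢ` with coefficients in `I`. -/
lemma exists_quadratic_of_mem {R ι : Type*} [CommRing R] [Fintype ι] (I : Ideal R) (v : ι → R)
    (x : R) (hx : x ∈ I * Ideal.span (Set.range v) ^ 2) :
    ∃ b : ι → ι → R, (∀ k l, b k l ∈ I) ∧ x = ∑ k, ∑ l, b k l * (v k * v l) := by
  have e : Ideal.span (Set.range v) ^ 2 =
      Ideal.span (Set.range fun q : ι × ι => v q.1 * v q.2) := by
    rw [pow_two, Ideal.span_mul_span']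
    congr 1
    ext y
    simp [Set.mem_mul]
  rw [e, ← smul_eq_mul, Ideal.span, Submodule.mem_ideal_smul_span_iff_exists_sum] at hx
  obtain ⟨a, ha, rfl⟩ := hx
  refine ⟨fun k l => a (k, l), fun k l => ha _, ?_⟩
  rw [Finsupp.sum_fintype _ _ (by simp), Fintype.sum_prod_type]
  rfl

/-- Solves the quadratic system `aₖₗ + ∑ᵢⱼ aᵢₖ aⱼₗ Eᵢⱼ(h) = bₖₗ`, where `hᵢ = ∑ⱼ aᵢⱼ vⱼ`. -/
lemma exists_solution {R ι : Type*} [CommRing R] [Fintype ι] (m : Ideal R) [IsAdicComplete m R]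
    (v : ι → R) (E : ι → ι → MvPolynomial ι R) (b : ι → ι → R) (hb : ∀ k l, b k l ∈ m) :
    ∃ a : ι → ι → R, (∀ k l, a k l ∈ m) ∧ ∀ k l,
      a k l + ∑ i, ∑ j, a i k * a j l * MvPolynomial.eval (fun i => ∑ j, a i j * v j) (E i j) =
        b k l := by
  let Q : (ι × ι → R) → ι → ι → R := fun a i j =>
    MvPolynomial.eval (fun i => ∑ j, a (i, j) * v j) (E i j)
  obtain ⟨a, ha, hfix⟩ := exists_fixedPoint (ι := ι × ι) m m le_rfl
    (fun a q => b q.1 q.2 - ∑ i, ∑ j, a (i, q.1) * a (j, q.2) * Q a i j)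
    (fun a ha q => sub_mem (hb _ _) (sum_mem fun i _ => sum_mem fun j _ =>
      Ideal.mul_mem_right _ _ (Ideal.mul_mem_right _ _ (ha _))))
    (by
      intro k a a' ha ha' haa q
      have hQ : ∀ i j, Q a i j - Q a' i j ∈ m ^ k := by
        intro i j
        refine eval_sub_eval_mem _ _ fun i => ?_
        rw [← Finset.sum_sub_distrib]
        refine sum_mem fun j _ => ?_
        rw [← sub_mul]
        exact Ideal.mul_mem_right _ _ (haa _)
      rw [sub_sub_sub_cancel_left, ← Finset.sum_sub_distrib]
      refine sum_mem fun i _ => ?_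
      rw [← Finset.sum_sub_distrib]
      refine sum_mem fun j _ => ?_
      have e : a' (i, q.1) * a' (j, q.2) * Q a' i j - a (i, q.1) * a (j, q.2) * Q a i j =
          -((a (i, q.1) - a' (i, q.1)) * a' (j, q.2) * Q a' i j +
            (a (j, q.2) - a' (j, q.2)) * a (i, q.1) * Q a' i j +
            (Q a i j - Q a' i j) * a (i, q.1) * a (j, q.2)) := by ring
      rw [e, pow_succ]
      exact neg_mem (add_mem (add_mem
        (Ideal.mul_mem_right _ _ (Ideal.mul_mem_mul (haa _) (ha' _)))
        (Ideal.mul_mem_right _ _ (Ideal.mul_mem_mul (haa _) (ha _))))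
        (Ideal.mul_mem_right _ _ (Ideal.mul_mem_mul (hQ i j) (ha _)))))
  refine ⟨fun k l => a (k, l), fun k l => ha _, fun k l => ?_⟩
  have := congrFun hfix (k, l)
  dsimp only [Q] at this
  linear_combination -this

/-- Ruiz's lemma: if `f` is a polynomial all of whose terms have degree `≥ 2`
and `g` is a power series with `f - g ∈ m·J_f²`, where `J_f` is the Jacobian ideal of `f`
in `ℂ⟦x₁,…,xₙ⟧`, then `ℂ⟦x₁,…,xₙ⟧/(f) ≅ ℂ⟦x₁,…,xₙ⟧/(g)` as `ℂ`-algebras. -/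
theorem ruiz_lemma (n : ℕ) (f : MvPolynomial (Fin n) ℂ)
    (hf : ∀ d ∈ f.support, 2 ≤ d.sum fun _ e => e)
    (g : MvPowerSeries (Fin n) ℂ)
    (hfg : (↑f : MvPowerSeries (Fin n) ℂ) - g ∈
      IsLocalRing.maximalIdeal (MvPowerSeries (Fin n) ℂ) *
        Ideal.span (Set.range fun i : Fin n =>
          ((MvPolynomial.pderiv i f : MvPolynomial (Fin n) ℂ) :
            MvPowerSeries (Fin n) ℂ)) ^ 2) :
    Nonempty
      ((MvPowerSeries (Fin n) ℂ ⧸ Ideal.span {(↑f : MvPowerSeries (Fin n) ℂ)}) ≃ₐ[ℂ]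
        (MvPowerSeries (Fin n) ℂ ⧸ Ideal.span {g})) := by
  set m := IsLocalRing.maximalIdeal (MvPowerSeries (Fin n) ℂ) with hm
  set v : Fin n → MvPowerSeries (Fin n) ℂ := fun i =>
    ((MvPolynomial.pderiv i f : MvPolynomial (Fin n) ℂ) : MvPowerSeries (Fin n) ℂ) with hv
  have hvm : ∀ i, v i ∈ m := pderiv_mem_maximalIdeal f hf
  -- `b` describes `f - g`, so the quadratic system is solved with right-hand side `-b`.
  obtain ⟨b, hb, hbe⟩ := exists_quadratic_of_mem m v _ hfg
  obtain ⟨E, hE⟩ := exists_taylor (X : Fin n → MvPowerSeries (Fin n) ℂ) f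
  obtain ⟨a, ha, hae⟩ := exists_solution m v E (fun k l => -b k l) fun k l => neg_mem (hb k l)
  set h : Fin n → MvPowerSeries (Fin n) ℂ := fun i => ∑ j, a i j * v j with hh
  have hhm : ∀ i, h i ∈ m ^ 2 := fun i => sum_mem fun j _ => by
    rw [pow_two]
    exact Ideal.mul_mem_mul (ha i j) (hvm j)
  have hs : HasSubst (X + h) := hasSubst_of_constantCoeff_zero fun i => by
    have := (mem_maximalIdeal_iff _).mp (Ideal.pow_le_self two_ne_zero (hhm i))
    simp [this]
  have haX : ∀ p : MvPolynomial (Fin n) ℂ,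
      MvPolynomial.aeval (X : Fin n → MvPowerSeries (Fin n) ℂ) p = p := fun p => by
    rw [← subst_coe, subst_self, id]
  have key : substAlgHom (R := ℂ) hs (f : MvPowerSeries (Fin n) ℂ) = g := by
    have e1 : ∑ i, h i * v i = ∑ k, ∑ l, a k l * (v k * v l) := by
      refine Finset.sum_congr rfl fun k _ => ?_
      rw [hh, Finset.sum_mul]
      exact Finset.sum_congr rfl fun l _ => by ring
    have e2 : ∑ i, ∑ j, h i * h j * MvPolynomial.eval h (E i j) =
        ∑ k, ∑ l, (∑ i, ∑ j, a i k * a j l * MvPolynomial.eval h (E i j)) * (v k * v l) := by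
      have e3 : ∀ i j, h i * h j * MvPolynomial.eval h (E i j) =
          ∑ k, ∑ l, a i k * a j l * MvPolynomial.eval h (E i j) * (v k * v l) := by
        intro i j
        have : h i * h j = ∑ k, ∑ l, a i k * v k * (a j l * v l) := Finset.sum_mul_sum ..
        rw [this, Finset.sum_mul]
        refine Finset.sum_congr rfl fun k _ => ?_
        rw [Finset.sum_mul]
        exact Finset.sum_congr rfl fun l _ => by ring
      simp only [e3, Finset.sum_mul]
      exact (Finset.sum_congr rfl fun i _ => Finset.sum_comm).trans (Finset.sum_comm.trans
        (Finset.sum_congr rfl fun k _ =>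
          (Finset.sum_congr rfl fun i _ => Finset.sum_comm).trans Finset.sum_comm))
    have e4 : ∑ k, ∑ l, a k l * (v k * v l) +
        ∑ k, ∑ l, (∑ i, ∑ j, a i k * a j l * MvPolynomial.eval h (E i j)) * (v k * v l) =
        -∑ k, ∑ l, b k l * (v k * v l) := by
      simp only [← Finset.sum_add_distrib, ← add_mul, hae, neg_mul, Finset.sum_neg_distrib]
    rw [substAlgHom_coe, hE]
    simp only [haX]
    change (f : MvPowerSeries (Fin n) ℂ) + ∑ i, h i * v i + _ = g
    rw [e1, e2, add_assoc, e4, ← hbe]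
    ring
  let Φ := AlgEquiv.ofBijective (substAlgHom (R := ℂ) hs) (bijective_substAlgHom h hhm hs)
  refine ⟨Ideal.quotientEquivAlg _ _ Φ ?_⟩
  rw [Ideal.map_span, Set.image_singleton]
  congr 2
  exact key.symm
end

section
/- Let R = ℂ⟦y,z⟧ be the formal power series ring in the two variables y, z over ℂ, with maximal ideal m. Let a, s, i, k be integers with s > a > 1, i ≥ 1, k ≥ i + a + 1 and k ≥ 2a, and let b ∈ R be a unit. Then there exist y′, z′ ∈ R and a unit b′ ∈ R such that y′ ≡ y mod m^{i+1}, z′ ≡ z mod m^{i+1}, and yᵃ z + zˢ − b yᵏ = (y′)ᵃ z′ + (z′)ˢ − b′ (y′)^{s(k−a)}; moreover s(k−a) ≥ a + i + 2. -/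
/-!
Put `n = k - a` and `z' = z - b yⁿ`, so that the left-hand side becomes `yᵃ z' + (z' + b yⁿ)ˢ`.
The mixed terms of the binomial expansion are divisible by `z' yⁿ`, hence by `yᵃ z'` since `n ≥ a`,
and the equation reads `yᵃ z' (1 + u) + z'ˢ + bˢ y^{sn}`. The lowest-order part of `u` is
`s b y^{n-a} z'^{s-2}` (`exists_add_pow_eq`), and `(n - a) + (s - 2) ≥ i`, so `u ∈ mⁱ`.
An `a`-th root `v` of `1 + u` with `v ≡ 1 mod mⁱ` exists by the binomial series
(`exists_root_one_add`); then `y' = y v` and `b' = -bˢ v^{-sn}` do the job.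
-/

open IsLocalRing

/-- The mixed terms of `(x + t)^(p+2)`, with the part linear in `t` singled out: it is the only one
whose cofactor of `x * t` is not itself a multiple of `t`. -/
lemma exists_add_pow_eq {R : Type*} [CommRing R] (x t : R) (p : ℕ) :
    ∃ r : R, (x + t) ^ (p + 2) =
      x ^ (p + 2) + t ^ (p + 2) + x * t * ((p + 2 : ℕ) * x ^ p + t * r) := by
  induction p with
  | zero => exact ⟨0, by push_cast; ring⟩
  | succ p ih =>
    obtain ⟨r, hr⟩ := ih
    refine ⟨t ^ p + x * r + (p + 2 : ℕ) * x ^ p + t * r, ?_⟩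
    rw [show p + 1 + 2 = (p + 2) + 1 by ring, pow_succ (x + t), hr]
    push_cast
    ring

lemma binomialSeries_inv_pow (a : ℕ) (ha : a ≠ 0) :
    PowerSeries.binomialSeries ℂ ((a : ℂ)⁻¹) ^ a = 1 + PowerSeries.X := by
  have h : ∀ (r : ℂ) (n : ℕ), PowerSeries.binomialSeries ℂ r ^ n =
      PowerSeries.binomialSeries ℂ ((n : ℂ) * r) := by
    intro r n
    induction n with
    | zero => simp
    | succ n ih => rw [pow_succ, ih, ← PowerSeries.binomialSeries_add]; congr 1; push_cast; ring
  have ha' : (a : ℂ) ≠ 0 := by exact_mod_cast ha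
  rw [h, mul_inv_cancel₀ ha']
  simpa using PowerSeries.binomialSeries_nat (R := ℂ) (A := ℂ) 1

/-- The root is obtained by substituting `u` into the binomial series of `(1 + X)^(1/a)`. -/
lemma exists_root_one_add {σ : Type*} (a : ℕ) (ha : a ≠ 0) (u : MvPowerSeries σ ℂ)
    (hu : MvPowerSeries.constantCoeff u = 0) :
    ∃ v : MvPowerSeries σ ℂ, v ^ a = 1 + u ∧ u ∣ v - 1 := by
  have hs : PowerSeries.HasSubst u := PowerSeries.HasSubst.of_constantCoeff_zero hu
  set f : PowerSeries ℂ := PowerSeries.binomialSeries ℂ ((a : ℂ)⁻¹) with hf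
  let φ := PowerSeries.substAlgHom (R := ℂ) hs
  have hX : φ PowerSeries.X = u := PowerSeries.substAlgHom_X hs
  refine ⟨φ f, ?_, ?_⟩
  · rw [← map_pow, hf, binomialSeries_inv_pow a ha, map_add, map_one, hX]
  · have hd : PowerSeries.X ∣ f - 1 := by
      rw [PowerSeries.X_dvd_iff, map_sub, hf, PowerSeries.binomialSeries_constantCoeff, map_one,
        sub_self]
    have := map_dvd φ hd
    rwa [hX, map_sub, map_one] at this

/-- the inductive step for normalizing `yᵃz + zˢ − byᵏ` in `ℂ⟦y,z⟧`
(with `y = X 0`, `z = X 1`): for `s > a > 1`, `i ≥ 1`, `k ≥ i + a + 1`, `k ≥ 2a` and a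
unit `b`, there are `y' ≡ y`, `z' ≡ z mod m^{i+1}` and a unit `b'` with
`yᵃz + zˢ − byᵏ = y'ᵃz' + z'ˢ − b'y'^{s(k−a)}`, and `s(k−a) ≥ a + i + 2`. -/
theorem dn_en_inductive_step (a s i k : ℕ) (has : a < s) (ha : 1 < a) (hi : 1 ≤ i)
    (hk1 : i + a + 1 ≤ k) (hk2 : 2 * a ≤ k)
    (b : MvPowerSeries (Fin 2) ℂ) (hb : IsUnit b) :
    ∃ y' z' b' : MvPowerSeries (Fin 2) ℂ, IsUnit b' ∧
      y' - MvPowerSeries.X 0 ∈ IsLocalRing.maximalIdeal (MvPowerSeries (Fin 2) ℂ) ^ (i + 1) ∧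
      z' - MvPowerSeries.X 1 ∈ IsLocalRing.maximalIdeal (MvPowerSeries (Fin 2) ℂ) ^ (i + 1) ∧
      (MvPowerSeries.X 0 : MvPowerSeries (Fin 2) ℂ) ^ a * MvPowerSeries.X 1 +
          MvPowerSeries.X 1 ^ s - b * MvPowerSeries.X 0 ^ k
        = y' ^ a * z' + z' ^ s - b' * y' ^ (s * (k - a)) ∧
      a + i + 2 ≤ s * (k - a) := by
  obtain ⟨p, rfl⟩ : ∃ p, s = p + 2 := ⟨s - 2, by omega⟩
  obtain ⟨c, rfl⟩ : ∃ c, k = 2 * a + c := ⟨k - 2 * a, by omega⟩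
  have hka : 2 * a + c - a = a + c := by omega
  rw [hka]
  set m := maximalIdeal (MvPowerSeries (Fin 2) ℂ) with hm
  set y : MvPowerSeries (Fin 2) ℂ := MvPowerSeries.X 0 with hy
  set z : MvPowerSeries (Fin 2) ℂ := MvPowerSeries.X 1 with hz
  have hmem : ∀ f : MvPowerSeries (Fin 2) ℂ, f ∈ m ↔ MvPowerSeries.constantCoeff f = 0 := by
    intro f
    rw [hm, mem_maximalIdeal, mem_nonunits_iff, MvPowerSeries.isUnit_iff_constantCoeff,
      isUnit_iff_ne_zero, not_not]
  have hym : y ∈ m := (hmem y).2 (by simp [hy])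
  have hzm : z ∈ m := (hmem z).2 (by simp [hz])
  have hyn : y ^ (a + c) ∈ m ^ (i + 1) :=
    Ideal.pow_le_pow_right (by omega) (Ideal.pow_mem_pow hym _)
  set t := b * y ^ (a + c) with ht
  have htm : t ∈ m ^ (i + 1) := Ideal.mul_mem_left _ _ hyn
  set z' := z - t with hz'
  have hz'm : z' ∈ m := sub_mem hzm (Ideal.pow_le_self (by omega) htm)
  obtain ⟨r, hr⟩ := exists_add_pow_eq z' t p
  set u := b * (y ^ c * ((p + 2 : ℕ) * z' ^ p + t * r)) with hu
  have hui : u ∈ m ^ i := by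
    refine Ideal.mul_mem_left _ _ ?_
    rw [mul_add]
    refine add_mem ?_ (Ideal.mul_mem_left _ _ (Ideal.mul_mem_right _ _
      (Ideal.pow_le_pow_right (by omega) htm)))
    rw [mul_left_comm]
    refine Ideal.mul_mem_left _ _ ?_
    -- the exponent bound `c + p ≥ i` comes from `a + c ≥ i + 1` and `p + 2 > a`
    have h : y ^ c * z' ^ p ∈ m ^ (c + p) := by
      rw [pow_add]
      exact Ideal.mul_mem_mul (Ideal.pow_mem_pow hym _) (Ideal.pow_mem_pow hz'm _)
    exact Ideal.pow_le_pow_right (by omega) h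
  have hum : u ∈ m := Ideal.pow_le_self (by omega) hui
  obtain ⟨v, hva, hvu⟩ := exists_root_one_add a (by omega) u ((hmem u).1 hum)
  have hvi : v - 1 ∈ m ^ i := Ideal.mem_of_dvd _ hvu hui
  have hv : IsUnit v := by
    rw [MvPowerSeries.isUnit_iff_constantCoeff]
    have h := (hmem _).1 (Ideal.mem_of_dvd _ hvu hum)
    rw [map_sub, map_one, sub_eq_zero] at h
    simp [h]
  obtain ⟨w, hvw⟩ := hv.exists_right_inv
  have hw : IsUnit w := IsUnit.of_mul_eq_one v (by rw [mul_comm, hvw])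
  refine ⟨y * v, z', -(b ^ (p + 2) * w ^ ((p + 2) * (a + c))),
    ((hb.pow _).mul (hw.pow _)).neg, ?_, ?_, ?_, by nlinarith⟩
  · rw [show y * v - y = (v - 1) * y by ring, pow_succ]
    exact Ideal.mul_mem_mul hvi hym
  · rw [hz', sub_sub_cancel_left]
    exact neg_mem htm
  · have h1 : b * y ^ (2 * a + c) = y ^ a * t := by rw [ht]; ring
    have h2 : z = z' + t := by rw [hz']; ring
    have h3 : t ^ (p + 2) = b ^ (p + 2) * y ^ ((p + 2) * (a + c)) := by
      rw [ht, mul_pow, ← pow_mul, mul_comm (a + c)]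
    have h4 : w ^ ((p + 2) * (a + c)) * (y * v) ^ ((p + 2) * (a + c)) =
        y ^ ((p + 2) * (a + c)) := by
      rw [← mul_pow, show w * (y * v) = y * (v * w) by ring, hvw, mul_one]
    have h5 : z' * t * ((p + 2 : ℕ) * z' ^ p + t * r) = y ^ a * z' * u := by
      rw [hu]
      nth_rewrite 1 [ht]
      ring
    have h6 : z ^ (p + 2) = z' ^ (p + 2) + t ^ (p + 2) + y ^ a * z' * u := by
      rw [h2, hr, h5]
    rw [h1, h6, h3, mul_pow, hva, neg_mul, mul_assoc (b ^ (p + 2)), h4]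
    linear_combination y ^ a * h2
end

section
/- Let n ≥ 4 be an integer and let a, b, c be units of the formal power series ring ℂ⟦x,y,z⟧. Then there is a ℂ-algebra isomorphism ℂ⟦x,y,z⟧/(a x² + b y² z + z^{n−1} + c x yⁿ) ≅ ℂ⟦x,y,z⟧/(x² + y² z + z^{n−1}). -/
/-!
The isomorphism comes from a formal coordinate change `(X', Y', Z')` of `ℂ⟦x,y,z⟧` in which the
given equation is *equal* to `X'² + Y'² Z' + Z'^(n-1)`.

Completing the square, `a x² + c x yⁿ = X'² - d y^(2n)` with `X' = √a (x + c yⁿ / (2a))` and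
`d = c² / (4a)`. To absorb `-d y^(2n)`, take a root `w = y² v` of
`b y² T + T^(n-1) - d y^(2n)`; after division by `y⁴` the equation for `v` reads
`v = b⁻¹ (d y^(2n-4) - y^(2n-6) v^(n-1))`, whose right-hand side is a contraction since `n ≥ 4`
(`exists_root`). With `Z' = z - w`,
`b y² z + z^(n-1) - d y^(2n) = b y² Z' + (Z' + w)^(n-1) - w^(n-1) = B y² Z' + Z'^(n-1)`,
where `B = b + v q` for some series `q` and `v` has no constant term, so `B` is a unit and
`Y' = √B y`.

The linear parts of `X', Y', Z'` are nonzero multiples of `x, y, z`, so the substitution is an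
automorphism by the formal inverse function theorem (`exists_algEquiv`). That theorem, the square
roots (`exists_sq_eq`) and the root `v` all follow from the fixed point theorem for maps raising the
order of differences (`exists_fixedPoint`).
-/

namespace DnNormalization

open MvPowerSeries

/-! ### The order filtration and contractions -/

section Contraction

variable {σ : Type*}

theorem le_order_sub {f g : MvPowerSeries σ ℂ} {k : ℕ∞} (hf : k ≤ f.order) (hg : k ≤ g.order) :
    k ≤ (f - g).order := by
  rw [sub_eq_add_neg]
  exact (le_min hf (by rwa [order_neg])).trans min_order_le_add

theorem le_order_mul_of_le {f g : MvPowerSeries σ ℂ} {k l : ℕ∞} (hf : k ≤ f.order)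
    (hg : l ≤ g.order) : k + l ≤ (f * g).order :=
  (add_le_add hf hg).trans le_order_mul

theorem two_le_order_mul {f g : MvPowerSeries σ ℂ} (hf : constantCoeff f = 0)
    (hg : constantCoeff g = 0) : 2 ≤ (f * g).order := by
  have := le_order_mul_of_le (one_le_order_iff_constCoeff_eq_zero.2 hf)
    (one_le_order_iff_constCoeff_eq_zero.2 hg)
  rwa [one_add_one_eq_two] at this

theorem two_le_order_add {f g : MvPowerSeries σ ℂ} (hf : 2 ≤ f.order) (hg : 2 ≤ g.order) :
    2 ≤ (f + g).order :=
  (le_min hf hg).trans min_order_le_add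

/-- Banach's fixed point theorem for the order filtration: the iterates `Φ^[k] 0` stabilise
coefficientwise. -/
theorem exists_fixedPoint (Φ : MvPowerSeries σ ℂ → MvPowerSeries σ ℂ)
    (hΦ : ∀ f g, (f - g).order + 1 ≤ (Φ f - Φ g).order) : ∃ f, Φ f = f := by
  have hstep : ∀ k : ℕ, (k : ℕ∞) ≤ (Φ^[k + 1] 0 - Φ^[k] 0).order := by
    intro k
    induction k with
    | zero => simp
    | succ k ih =>
      rw [Function.iterate_succ_apply', Function.iterate_succ_apply' Φ k]
      rw [Function.iterate_succ_apply'] at ih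
      push_cast
      exact (add_le_add_left ih 1).trans (hΦ _ _)
  have hstab : ∀ d : σ →₀ ℕ, ∀ k : ℕ, d.degree + 1 ≤ k →
      coeff d (Φ^[k] 0) = coeff d (Φ^[d.degree + 1] 0) := by
    intro d k hk
    induction k, hk using Nat.le_induction with
    | base => rfl
    | succ k hk ih =>
      rw [← ih, ← sub_eq_zero, ← map_sub]
      refine coeff_of_lt_order (lt_of_lt_of_le ?_ (hstep k))
      exact_mod_cast hk
  let f : MvPowerSeries σ ℂ := fun d => coeff d (Φ^[d.degree + 1] 0)
  have hf : ∀ k : ℕ, (k : ℕ∞) ≤ (f - Φ^[k] 0).order := by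
    intro k
    refine nat_le_order fun d hd => ?_
    rw [map_sub, hstab d k hd, sub_eq_zero]
    rfl
  refine ⟨f, ?_⟩
  ext d
  have h1 := (add_le_add_left (hf d.degree) 1).trans (hΦ _ _)
  rw [← Function.iterate_succ_apply' Φ] at h1
  have h2 : coeff d (Φ f - Φ^[d.degree + 1] 0) = 0 :=
    coeff_of_lt_order (lt_of_lt_of_le (by exact_mod_cast Nat.lt_succ_self _) h1)
  rw [map_sub, sub_eq_zero] at h2
  exact h2

/-- An additive map that is the identity up to terms of higher order is bijective. -/
theorem bijective_of_order (T : MvPowerSeries σ ℂ →+ MvPowerSeries σ ℂ)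
    (hT : ∀ f, f.order + 1 ≤ (T f - f).order) : Function.Bijective T := by
  constructor
  · rw [injective_iff_map_eq_zero]
    intro f hf
    have h := hT f
    rw [hf, zero_sub, order_neg] at h
    by_contra hne
    have hlt : f.order < ⊤ := by rw [lt_top_iff_ne_top, Ne, order_eq_top_iff]; exact hne
    exact absurd h (not_le.2 ((ENat.lt_add_one_iff hlt.ne).2 le_rfl))
  · intro g
    obtain ⟨f, hf⟩ := exists_fixedPoint (fun f => g - (T f - f)) (by
      intro f₁ f₂
      have h := hT (f₁ - f₂)
      have e : g - (T f₁ - f₁) - (g - (T f₂ - f₂)) = -(T (f₁ - f₂) - (f₁ - f₂)) := by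
        rw [map_sub]; ring
      rwa [e, order_neg])
    refine ⟨f, ?_⟩
    linear_combination -hf

/-- A power series over `ℂ` with nonzero constant term is a square. -/
theorem exists_sq_eq {a : MvPowerSeries σ ℂ} (ha : constantCoeff a ≠ 0) :
    ∃ s : MvPowerSeries σ ℂ, s ^ 2 = a ∧ constantCoeff s ≠ 0 := by
  obtain ⟨s₀, hs₀⟩ := IsAlgClosed.exists_pow_nat_eq (constantCoeff a) (n := 2) (by norm_num)
  have hs0 : s₀ ≠ 0 := by rintro rfl; exact ha (by rw [← hs₀]; norm_num)
  -- Writing `s = s₀ + h` with `h` in the maximal ideal, the equation `s² = a` becomes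
  -- `h = (a - s₀² - h²) / (2 s₀)`. Subtracting the constant term of `h` before squaring makes
  -- the right-hand side a contraction on all power series.
  let t : MvPowerSeries σ ℂ → MvPowerSeries σ ℂ := fun h => h - C (constantCoeff h)
  have ht0 : ∀ h, constantCoeff (t h) = 0 := fun h => by simp [t]
  have ht : ∀ f g, (f - g).order ≤ (t f - t g).order := by
    intro f g
    refine le_order fun d hd => ?_
    have h1 : coeff d (f - g) = 0 := coeff_of_lt_order hd
    have h2 : constantCoeff f - constantCoeff g = 0 := by
      rw [← map_sub, ← one_le_order_iff_constCoeff_eq_zero]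
      exact Order.one_le_iff_pos.2 (lt_of_le_of_lt zero_le hd)
    have h3 : t f - t g = (f - g) - C (constantCoeff f - constantCoeff g) := by
      simp only [t, map_sub]; ring
    rw [h3, h2, map_zero, sub_zero, h1]
  obtain ⟨h, hh⟩ := exists_fixedPoint
    (fun h => C ((2 * s₀)⁻¹) * (a - C s₀ ^ 2 - t h ^ 2)) (by
      intro f g
      have e : C ((2 * s₀)⁻¹) * (a - C s₀ ^ 2 - t f ^ 2) - C ((2 * s₀)⁻¹) *
          (a - C s₀ ^ 2 - t g ^ 2) = (t f - t g) * (-C ((2 * s₀)⁻¹) * (t f + t g)) := by ring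
      rw [e]
      refine le_order_mul_of_le (ht f g) (one_le_order_iff_constCoeff_eq_zero.2 ?_)
      simp [ht0])
  have hh0 : constantCoeff h = 0 := by
    rw [← hh]; simp [ht0, hs₀]
  have hth : t h = h := by simp [t, hh0]
  have hC : C (2 * s₀) * C ((2 * s₀)⁻¹) = (1 : MvPowerSeries σ ℂ) := by
    rw [← map_mul, mul_inv_cancel₀ (by simpa using hs0), map_one]
  have hC2 : (C (2 * s₀) : MvPowerSeries σ ℂ) = 2 * C s₀ := by rw [map_mul, map_ofNat]
  refine ⟨C s₀ + h, ?_, by simpa [hh0] using hs0⟩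
  simp only [hth] at hh
  linear_combination (-C (2 * s₀)) * hh + (a - C s₀ ^ 2 - h ^ 2) * hC - h * hC2

end Contraction

/-! ### The formal inverse function theorem -/

section Coordinates

variable {σ : Type*}

/-- If each `p i` agrees with `X i` to first order, then the monomial `p ^ d` agrees with `X ^ d`
up to terms of degree greater than that of `d`. -/
theorem order_prod_pow_sub {p : σ → MvPowerSeries σ ℂ} (hp : ∀ i, 2 ≤ (p i - X i).order)
    (d : σ →₀ ℕ) :
    (d.degree : ℕ∞) + 1 ≤
      ((d.prod fun s m => p s ^ m) - d.prod fun s m => (X s : MvPowerSeries σ ℂ) ^ m).order := by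
  have key : ∀ d : σ →₀ ℕ, ∀ e : σ →₀ ℕ, ∀ P Q : MvPowerSeries σ ℂ,
      (d.degree : ℕ∞) + 1 ≤ (P - monomial d 1).order →
      (e.degree : ℕ∞) + 1 ≤ (Q - monomial e 1).order →
      ((d + e).degree : ℕ∞) + 1 ≤ (P * Q - monomial (d + e) 1).order := by
    intro d e P Q hP hQ
    have hd : (d.degree : ℕ∞) ≤ (monomial d (1 : ℂ)).order :=
      (order_monomial_of_ne_zero one_ne_zero).ge
    have he : (e.degree : ℕ∞) ≤ (monomial e (1 : ℂ)).order :=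
      (order_monomial_of_ne_zero one_ne_zero).ge
    have hQ' : (e.degree : ℕ∞) ≤ Q.order := by
      have := (le_min (le_self_add.trans hQ) he).trans min_order_le_add
      rwa [sub_add_cancel] at this
    have e1 : P * Q - monomial (d + e) 1 =
        (P - monomial d 1) * Q + monomial d 1 * (Q - monomial e 1) := by
      have : (monomial (d + e) (1 : ℂ)) = monomial d 1 * monomial e 1 := by
        rw [monomial_mul_monomial, one_mul]
      rw [this]; ring
    rw [e1, map_add]
    push_cast
    refine (le_min ?_ ?_).trans min_order_le_add
    · have := le_order_mul_of_le hP hQ'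
      rwa [add_right_comm] at this
    · have := le_order_mul_of_le hd hQ
      rwa [← add_assoc] at this
  have hX : ∀ d : σ →₀ ℕ, (d.prod fun s m => (X s : MvPowerSeries σ ℂ) ^ m) = monomial d 1 :=
    fun d => (monomial_one_eq d).symm
  rw [hX]
  induction d using Finsupp.induction_linear with
  | zero => simp
  | add d e hd he =>
    rw [Finsupp.prod_add_index' (by simp) (by intros; rw [pow_add])]
    exact key _ _ _ _ hd he
  | single s m =>
    rw [Finsupp.prod_single_index (by simp)]
    induction m with
    | zero => simp
    | succ m ih =>
      rw [pow_succ, Finsupp.single_add]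
      refine key _ _ _ _ ih ?_
      have := hp s
      rw [Finsupp.degree_single]
      simpa [X, one_add_one_eq_two] using this

/-- Formal inverse function theorem, for a coordinate change tangent to the identity. -/
theorem subst_bijective [Finite σ] {p : σ → MvPowerSeries σ ℂ}
    (hp : ∀ i, 2 ≤ (p i - X i).order) (hs : HasSubst p) :
    Function.Bijective (substAlgHom (R := ℂ) hs) := by
  refine bijective_of_order (substAlgHom (R := ℂ) hs).toRingHom.toAddMonoidHom fun f => le_order fun e he => ?_
  -- Only monomials of degree at least the order of `f` occur in `f`, and for these the
  -- substitution does not change the coefficients in degrees up to that order.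
  have h1 : coeff e (subst p f) = coeff e (subst X f) := by
    rw [coeff_subst hs, coeff_subst HasSubst.X]
    refine finsum_congr fun d => ?_
    by_cases hd : coeff d f = 0
    · rw [hd, zero_smul, zero_smul]
    · congr 1
      rw [← sub_eq_zero, ← map_sub]
      refine coeff_of_lt_order (he.trans_le ?_)
      exact (add_le_add_left (order_le hd) 1).trans (order_prod_pow_sub hp d)
  rw [subst_self, id] at h1
  simp [substAlgHom_apply, h1]

/-- Formal inverse function theorem for a coordinate change with diagonal linear part `l`. -/
theorem exists_algEquiv [Finite σ] (q : σ → MvPowerSeries σ ℂ) (l : σ → ℂ) (hl : ∀ i, l i ≠ 0)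
    (hq : ∀ i, 2 ≤ (q i - C (l i) * X i).order) :
    ∃ E : MvPowerSeries σ ℂ ≃ₐ[ℂ] MvPowerSeries σ ℂ, ∀ i, E (X i) = q i := by
  let p : σ → MvPowerSeries σ ℂ := fun i => C (l i)⁻¹ * q i
  have hCl : ∀ i, C (l i)⁻¹ * C (l i) = (1 : MvPowerSeries σ ℂ) := fun i => by
    rw [← map_mul, inv_mul_cancel₀ (hl i), map_one]
  have hp : ∀ i, 2 ≤ (p i - X i).order := by
    intro i
    have e : p i - X i = C (l i)⁻¹ * (q i - C (l i) * X i) := by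
      linear_combination X i * hCl i
    rw [e]
    exact (hq i).trans (le_add_self.trans le_order_mul)
  have hp0 : ∀ i, constantCoeff (p i) = 0 := by
    intro i
    have h : constantCoeff (p i - X i) = 0 :=
      one_le_order_iff_constCoeff_eq_zero.1 (le_trans (by norm_num) (hp i))
    simpa using h
  have hs : HasSubst p := hasSubst_of_constantCoeff_zero hp0
  have hr : Function.Bijective (rescaleAlgHom (R := ℂ) l) := by
    have h1 : ∀ f : MvPowerSeries σ ℂ, rescale (fun i => (l i)⁻¹) (rescale l f) = f := fun f => by
      rw [rescale_rescale, show (l * fun i => (l i)⁻¹) = 1 from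
        funext fun i => mul_inv_cancel₀ (hl i), rescale_one]; rfl
    have h2 : ∀ f : MvPowerSeries σ ℂ, rescale l (rescale (fun i => (l i)⁻¹) f) = f := fun f => by
      rw [rescale_rescale, show ((fun i => (l i)⁻¹) * l) = 1 from
        funext fun i => inv_mul_cancel₀ (hl i), rescale_one]; rfl
    refine Function.bijective_iff_has_inverse.2 ⟨rescale (fun i => (l i)⁻¹), ?_, ?_⟩
    · intro f; rw [rescaleAlgHom_apply]; exact h1 f
    · intro f; rw [rescaleAlgHom_apply]; exact h2 f
  refine ⟨(AlgEquiv.ofBijective _ hr).trans (AlgEquiv.ofBijective _ (subst_bijective hp hs)),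
    fun i => ?_⟩
  have hX : rescaleAlgHom l (X i) = l i • (X i : MvPowerSeries σ ℂ) := by
    rw [rescaleAlgHom_apply, rescale_eq_subst, subst_X (HasSubst.smul_X l)]
    rfl
  rw [AlgEquiv.trans_apply, AlgEquiv.ofBijective_apply, AlgEquiv.ofBijective_apply, hX, map_smul,
    substAlgHom_X, smul_eq_C_mul]
  linear_combination q i * hCl i

end Coordinates

/-! ### The normal form -/

theorem exists_add_pow_eq {R : Type*} [CommRing R] (x y : R) (m : ℕ) (hm : 1 ≤ m) :
    ∃ q, (x + y) ^ m = x ^ m + y ^ m + x * y * q := by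
  induction m, hm using Nat.le_induction with
  | base => exact ⟨0, by ring⟩
  | succ m hm ih =>
    obtain ⟨q, hq⟩ := ih
    obtain ⟨k, rfl⟩ := Nat.exists_eq_add_of_le' hm
    exact ⟨x ^ k + y ^ k + (x + y) * q, by rw [pow_succ, hq]; ring⟩

/-- If `b'` is the inverse of `b`, then `y² v` is a root of `b y² T + T^(n-1) - d y^(2n)` for
`n = k + 4`; the factor `y⁴` is cancelled in the equation for `v`. -/
theorem exists_root {σ : Type*} (b' d y : MvPowerSeries σ ℂ) (hy : constantCoeff y = 0) (k : ℕ) :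
    ∃ v : MvPowerSeries σ ℂ, v = b' * (d * y ^ (2 * k + 4) - y ^ (2 * k + 2) * v ^ (k + 3)) ∧
      constantCoeff v = 0 := by
  obtain ⟨v, hv⟩ := exists_fixedPoint
    (fun v => b' * (d * y ^ (2 * k + 4) - y ^ (2 * k + 2) * v ^ (k + 3))) (by
      intro f g
      obtain ⟨r, hr⟩ := sub_dvd_pow_sub_pow f g (k + 3)
      have e : b' * (d * y ^ (2 * k + 4) - y ^ (2 * k + 2) * f ^ (k + 3)) -
          b' * (d * y ^ (2 * k + 4) - y ^ (2 * k + 2) * g ^ (k + 3)) =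
          (f - g) * (-(b' * y ^ (2 * k + 2) * r)) := by
        linear_combination (-(b' * y ^ (2 * k + 2))) * hr
      rw [e]
      refine le_order_mul_of_le le_rfl (one_le_order_iff_constCoeff_eq_zero.2 ?_)
      simp [hy])
  refine ⟨v, hv.symm, ?_⟩
  rw [← hv]
  simp [hy]

/-- The coordinate change carrying the `D_n` equation to the given one, with `n = k + 4`. No unit
factor is needed. -/
theorem exists_algEquiv_apply (k : ℕ) (a b c : MvPowerSeries (Fin 3) ℂ)
    (ha : IsUnit a) (hb : IsUnit b) :
    ∃ E : MvPowerSeries (Fin 3) ℂ ≃ₐ[ℂ] MvPowerSeries (Fin 3) ℂ,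
      E (X 0 ^ 2 + X 1 ^ 2 * X 2 + X 2 ^ (k + 3)) =
        a * X 0 ^ 2 + b * X 1 ^ 2 * X 2 + X 2 ^ (k + 3) + c * X 0 * X 1 ^ (k + 4) := by
  obtain ⟨a', haa'⟩ := ha.exists_right_inv
  obtain ⟨b', hbb'⟩ := hb.exists_right_inv
  have ha0 : constantCoeff a ≠ 0 := (isUnit_iff_constantCoeff.1 ha).ne_zero
  have hb0 : constantCoeff b ≠ 0 := (isUnit_iff_constantCoeff.1 hb).ne_zero
  -- `h = 1/2`, so that `c² h² a'` is the coefficient `d = c² / (4a)` left by completing the square.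
  obtain ⟨h, hh⟩ : ∃ h : MvPowerSeries (Fin 3) ℂ, 2 * h = 1 :=
    ⟨C (2⁻¹), by rw [← map_ofNat C 2, ← map_mul]; norm_num⟩
  obtain ⟨v, hv, hv0⟩ := exists_root b' (c ^ 2 * h ^ 2 * a') (X 1 : MvPowerSeries (Fin 3) ℂ)
    (by simp) k
  obtain ⟨q, hq⟩ := exists_add_pow_eq (X 2 - X 1 ^ 2 * v : MvPowerSeries (Fin 3) ℂ)
    (X 1 ^ 2 * v) (k + 3) (by omega)
  rw [sub_add_cancel] at hq
  obtain ⟨s, hs, hs0⟩ := exists_sq_eq ha0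
  obtain ⟨t, ht, ht0⟩ := exists_sq_eq (a := b + v * q) (by simpa [hv0] using hb0)
  obtain ⟨E, hE⟩ := exists_algEquiv
    ![s * (X 0 + c * h * a' * X 1 ^ (k + 4)), t * X 1, X 2 - X 1 ^ 2 * v]
    ![constantCoeff s, constantCoeff t, 1]
    (by intro i; fin_cases i <;> simp [hs0, ht0]) (by
      intro i
      fin_cases i
      · have e : s * (X 0 + c * h * a' * X 1 ^ (k + 4)) - C (constantCoeff s) * X 0 =
            (s - C (constantCoeff s)) * X 0 + (s * c * h * a' * X 1 ^ (k + 3)) * X 1 := by ring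
        have := two_le_order_add
          (two_le_order_mul (f := s - C (constantCoeff s)) (g := X 0) (by simp) (by simp))
          (two_le_order_mul (f := s * c * h * a' * X 1 ^ (k + 3)) (g := X 1) (by simp) (by simp))
        rw [← e] at this
        exact this
      · have e : t * X 1 - C (constantCoeff t) * X 1 = (t - C (constantCoeff t)) * X 1 := by ring
        have := two_le_order_mul (f := t - C (constantCoeff t)) (g := X 1) (by simp) (by simp)
        rw [← e] at this
        exact this
      · have e : X 2 - X 1 ^ 2 * v - C 1 * X 2 = (-(X 1 * v)) * X 1 := by rw [map_one]; ring
        have := two_le_order_mul (f := -(X 1 * v)) (g := X 1) (by simp) (by simp)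
        rw [← e] at this
        exact this)
  refine ⟨E, ?_⟩
  have hE0 := hE 0
  have hE1 := hE 1
  have hE2 := hE 2
  simp only [Matrix.cons_val] at hE0 hE1 hE2
  simp only [map_add, map_mul, map_pow, hE0, hE1, hE2]
  have hbv : b * v = c ^ 2 * h ^ 2 * a' * X 1 ^ (2 * k + 4) - X 1 ^ (2 * k + 2) * v ^ (k + 3) := by
    linear_combination b * hv +
      (c ^ 2 * h ^ 2 * a' * X 1 ^ (2 * k + 4) - X 1 ^ (2 * k + 2) * v ^ (k + 3)) * hbb'
  rw [hq]
  linear_combination (X 0 + c * h * a' * X 1 ^ (k + 4)) ^ 2 * hs +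
    (X 1 ^ 2 * (X 2 - X 1 ^ 2 * v)) * ht +
    (2 * h * c * X 0 * X 1 ^ (k + 4) + c ^ 2 * h ^ 2 * a' * X 1 ^ (2 * k + 8)) * haa' +
    c * X 0 * X 1 ^ (k + 4) * hh - X 1 ^ 4 * hbv

end DnNormalization

/-- for `n ≥ 4` and units `a, b, c` of `ℂ⟦x,y,z⟧` (with `x = X 0`,
`y = X 1`, `z = X 2`), the singularity `a x² + b y² z + z^{n−1} + c x yⁿ = 0` is
analytically isomorphic to the `D_n` singularity `x² + y² z + z^{n−1} = 0`. -/
theorem dn_singularity_normalization (n : ℕ) (hn : 4 ≤ n)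
    (a b c : MvPowerSeries (Fin 3) ℂ) (ha : IsUnit a) (hb : IsUnit b) (hc : IsUnit c) :
    Nonempty
      ((MvPowerSeries (Fin 3) ℂ ⧸ Ideal.span
          {a * MvPowerSeries.X 0 ^ 2 + b * MvPowerSeries.X 1 ^ 2 * MvPowerSeries.X 2 +
            MvPowerSeries.X 2 ^ (n - 1) + c * MvPowerSeries.X 0 * MvPowerSeries.X 1 ^ n}) ≃ₐ[ℂ]
        (MvPowerSeries (Fin 3) ℂ ⧸ Ideal.span
          {(MvPowerSeries.X 0 : MvPowerSeries (Fin 3) ℂ) ^ 2 +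
            MvPowerSeries.X 1 ^ 2 * MvPowerSeries.X 2 +
            MvPowerSeries.X 2 ^ (n - 1)})) := by
  obtain ⟨k, rfl⟩ := Nat.exists_eq_add_of_le' hn
  obtain ⟨E, hE⟩ := DnNormalization.exists_algEquiv_apply k a b c ha hb
  refine ⟨(Ideal.quotientEquivAlg _ _ E ?_).symm⟩
  rw [Ideal.map_span, Set.image_singleton]
  exact congrArg (fun f => Ideal.span {f}) hE.symm
end

section
/- Let r ≥ 3 be an integer and let a, b, c be units of the formal power series ring ℂ⟦x,y,z⟧. Then there is a ℂ-algebra isomorphism ℂ⟦x,y,z⟧/(a x² + b (y² z − z^{2r−1}) + c (y⁵ − z^{5r−5})) ≅ ℂ⟦x,y,z⟧/(x² + y² z + z^{2r−1}). -/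
/-!
Write `n = 2r - 1` and `f` for the left-hand equation. The proof exhibits formal coordinates
`x' = α x`, `y' = β y`, `w' = γ (z - y³ s)`, with `α, β, γ` units, in which `f` is literally
`x'² + y'² w' + w'ⁿ`.

Since `5r - 5 > n`, the two pure powers of `z` combine to `-u zⁿ` with
`u = b + c z^(3r-4)` a unit. Put `z = w + y³ s` with `s` still to be chosen. Expanding
`zⁿ = wⁿ + (y³ s)ⁿ + w y³ s A`, the equation becomes
`a x² + y² w (b - u y s A) - u wⁿ + y⁵ (b s + c - u y^(3n-5) sⁿ)`.
The last bracket vanishes for a suitable `s` by Hensel's lemma (`exists_fixedPoint`), the ring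
being complete for the ideal `(x, y, z)`. The three remaining coefficients are units, so they are
absorbed into the variables by taking a square root of `a`, an `n`-th root of `-u` and one
more square root, again by Hensel's lemma (`exists_root_of_isUnit`).

That `x', y', w'` are coordinates is a form of the formal inverse function theorem
(`substitution_bijective`): the substitution endomorphism sends `x, y, z` to generators of the
ideal `(x, y, z)`, hence is surjective by completeness, hence injective because the ring
is Noetherian.
-/

open MvPowerSeries

/-- The ring of formal power series in three variables over the complex numbers. -/
local notation "Rxyz" => MvPowerSeries (Fin 3) ℂ

/-- The ideal generated by the three variables. -/
local notation "mxyz" => (Ideal.span (Set.range MvPowerSeries.X) : Ideal (MvPowerSeries (Fin 3) ℂ))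

/-! ### The ideal of the variables -/

lemma mem_ideal_of_constantCoeff {p : Rxyz} (hp : constantCoeff p = 0) : p ∈ mxyz := by
  classical
  -- Sort the monomials of `p` by the first variable they contain.
  let p0 : Rxyz := fun e => if e 0 ≠ 0 then coeff e p else 0
  let p1 : Rxyz := fun e => if e 0 = 0 ∧ e 1 ≠ 0 then coeff e p else 0
  let p2 : Rxyz := fun e => if e 0 = 0 ∧ e 1 = 0 ∧ e 2 ≠ 0 then coeff e p else 0
  have c0 : ∀ e, coeff e p0 = if e 0 ≠ 0 then coeff e p else 0 := fun e => rfl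
  have c1 : ∀ e, coeff e p1 = if e 0 = 0 ∧ e 1 ≠ 0 then coeff e p else 0 := fun e => rfl
  have c2 : ∀ e, coeff e p2 = if e 0 = 0 ∧ e 1 = 0 ∧ e 2 ≠ 0 then coeff e p else 0 :=
    fun e => rfl
  have h : p = p0 + p1 + p2 := by
    ext e
    rw [map_add, map_add, c0, c1, c2]
    by_cases h0 : e 0 = 0 <;> by_cases h1 : e 1 = 0 <;> by_cases h2 : e 2 = 0 <;>
      simp [h0, h1, h2]
    have : e = 0 := by
      ext i
      fin_cases i <;> simp [h0, h1, h2]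
    rw [this, coeff_zero_eq_constantCoeff_apply, hp]
  have hX : ∀ i : Fin 3, (X i : Rxyz) ∈ mxyz := fun i => Ideal.subset_span ⟨i, rfl⟩
  have d0 : (X 0 : Rxyz) ∣ p0 := X_dvd_iff.2 fun e he => by simp [c0, he]
  have d1 : (X 1 : Rxyz) ∣ p1 := X_dvd_iff.2 fun e he => by simp [c1, he]
  have d2 : (X 2 : Rxyz) ∣ p2 := X_dvd_iff.2 fun e he => by simp [c2, he]
  rw [h]
  exact add_mem (add_mem (Ideal.mem_of_dvd _ d0 (hX 0)) (Ideal.mem_of_dvd _ d1 (hX 1)))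
    (Ideal.mem_of_dvd _ d2 (hX 2))

lemma isUnit_iff_coeff {p : Rxyz} : IsUnit p ↔ constantCoeff p ≠ 0 := by
  rw [MvPowerSeries.isUnit_iff_constantCoeff, isUnit_iff_ne_zero]

/-! ### Consequences of Hensel's lemma -/

/-- Hensel's lemma needs a monic polynomial, so it is applied to the equation
`σ ^ (k + 1) - σ ^ k + e = 0` satisfied by the inverse `σ` of the fixed point. -/
lemma exists_fixedPoint_one (k : ℕ) {e : Rxyz} (he : constantCoeff e = 0) :
    ∃ τ : Rxyz, τ = 1 + e * τ ^ (k + 1) := by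
  let g : Polynomial Rxyz := Polynomial.X ^ (k + 1) + (Polynomial.C e - Polynomial.X ^ k)
  have hmonic : g.Monic := by
    apply Polynomial.monic_X_pow_add
    refine lt_of_le_of_lt (b := (k : WithBot ℕ)) ?_ (by exact_mod_cast Nat.lt_succ_self k)
    refine (Polynomial.degree_sub_le _ _).trans (max_le ?_ (Polynomial.degree_X_pow_le k))
    exact Polynomial.degree_C_le.trans (by exact_mod_cast Nat.zero_le k)
  obtain ⟨σ, hσ, hσ1⟩ := HenselianRing.is_henselian (I := mxyz) g hmonic 1
    (by simpa [g] using mem_ideal_of_constantCoeff he)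
    (by simp [g, Polynomial.derivative_X_pow])
  have hg : σ ^ (k + 1) + (e - σ ^ k) = 0 := by simpa [g, Polynomial.IsRoot] using hσ
  have hunit : IsUnit σ := by
    have hmem := (HenselianRing.jac (I := mxyz)) hσ1
    rw [Ideal.mem_jacobson_bot] at hmem
    simpa using hmem 1
  obtain ⟨v, rfl⟩ := hunit
  refine ⟨((v⁻¹ : Rxyzˣ) : Rxyz), ?_⟩
  have hv : ((v⁻¹ : Rxyzˣ) : Rxyz) * v = 1 := Units.inv_mul v
  set i : Rxyz := ((v⁻¹ : Rxyzˣ) : Rxyz)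
  have h1 : i ^ k * (v : Rxyz) ^ k = 1 := by rw [← mul_pow, hv, one_pow]
  have h2 : i ^ (k + 1) * (v : Rxyz) ^ (k + 1) = 1 := by rw [← mul_pow, hv, one_pow]
  linear_combination (-i ^ (k + 1)) * hg + h2 - i * h1

/-- The substitution `s = d * τ` reduces the equation to the case `d = 1`. -/
lemma exists_fixedPoint_s7 (k : ℕ) (d : Rxyz) {e : Rxyz} (he : constantCoeff e = 0) :
    ∃ s : Rxyz, s = d + e * s ^ (k + 1) := by
  obtain ⟨τ, hτ⟩ := exists_fixedPoint_one k (e := e * d ^ k) (by simp [he])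
  refine ⟨d * τ, ?_⟩
  linear_combination d * hτ

lemma exists_root_of_isUnit {n : ℕ} (hn : n ≠ 0) {u : Rxyz} (hu : IsUnit u) :
    ∃ v : Rxyz, IsUnit v ∧ v ^ n = u := by
  rw [isUnit_iff_coeff] at hu
  obtain ⟨l, hl⟩ := IsAlgClosed.exists_pow_nat_eq (constantCoeff u) (Nat.pos_of_ne_zero hn)
  have hl0 : l ≠ 0 := by
    rintro rfl
    rw [zero_pow hn] at hl
    exact hu hl.symm
  obtain ⟨v, hv, -⟩ := HenselianRing.is_henselian (I := mxyz)
    (Polynomial.X ^ n - Polynomial.C u) (Polynomial.monic_X_pow_sub_C u hn) (C l)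
    (by
      apply mem_ideal_of_constantCoeff
      simp [hl])
    (by
      apply IsUnit.map
      rw [isUnit_iff_coeff]
      simp [Polynomial.derivative_X_pow, hl0, hn])
  have hvn : v ^ n = u := by
    simpa [Polynomial.IsRoot, sub_eq_zero] using hv
  refine ⟨v, ?_, hvn⟩
  rw [isUnit_iff_coeff]
  intro h0
  apply hu
  rw [← hvn, map_pow, h0, zero_pow hn]

/-! ### Changes of coordinates -/

lemma injective_of_surjective_noetherian {A : Type*} [CommRing A] [IsNoetherianRing A]
    (f : A →+* A) (hf : Function.Surjective f) : Function.Injective f := by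
  -- The ascending chain of kernels of the iterates of `f` becomes stationary.
  let K : ℕ →o Ideal A := ⟨fun n => RingHom.ker (f ^ n), monotone_nat_of_le_succ fun n x hx => by
    rw [RingHom.mem_ker] at hx ⊢
    rw [pow_succ', RingHom.mul_def, RingHom.comp_apply, hx, map_zero]⟩
  obtain ⟨n, hn⟩ := monotone_stabilizes_iff_noetherian.2 (inferInstanceAs (IsNoetherian A A)) K
  rw [injective_iff_map_eq_zero]
  intro x hx
  have hs : Function.Surjective (f ^ n) := by
    rw [RingHom.coe_pow]
    exact hf.iterate n
  obtain ⟨y, rfl⟩ := hs x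
  have hy : y ∈ K (n + 1) := by
    change y ∈ RingHom.ker (f ^ (n + 1))
    rw [RingHom.mem_ker, pow_succ', RingHom.mul_def, RingHom.comp_apply, hx]
  rw [← hn (n + 1) (Nat.le_succ n)] at hy
  exact hy

/-- A form of the formal inverse function theorem: the Jacobian condition is replaced by the
equivalent requirement that the new coordinates generate the ideal of the variables. -/
lemma substitution_bijective (w : Fin 3 → Rxyz) (h0 : ∀ i, constantCoeff (w i) = 0)
    (hX : ∀ i, (X i : Rxyz) ∈ Ideal.span (Set.range w)) :
    Function.Bijective (substAlgHom (R := ℂ) (hasSubst_of_constantCoeff_zero h0)) := by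
  set φ := substAlgHom (R := ℂ) (hasSubst_of_constantCoeff_zero h0) with hφ
  have hmap : Ideal.map (φ : Rxyz →+* Rxyz) mxyz = mxyz := by
    rw [Ideal.map_span, ← Set.range_comp]
    have hcomp : ((φ : Rxyz →+* Rxyz) ∘ X) = w := by
      funext i
      exact substAlgHom_X (hasSubst_of_constantCoeff_zero h0) i
    rw [hcomp]
    apply le_antisymm
    · rw [Ideal.span_le]
      rintro _ ⟨i, rfl⟩
      exact mem_ideal_of_constantCoeff (h0 i)
    · rw [Ideal.span_le]
      rintro _ ⟨i, rfl⟩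
      exact hX i
  have hsurj : Function.Surjective (φ : Rxyz →+* Rxyz) := by
    have : IsHausdorff (Ideal.map (φ : Rxyz →+* Rxyz) mxyz) Rxyz := by
      rw [hmap]
      infer_instance
    apply surjective_of_mk_map_comp_surjective (I := mxyz)
    intro q
    obtain ⟨p, rfl⟩ := Ideal.Quotient.mk_surjective q
    refine ⟨C (constantCoeff p), ?_⟩
    rw [RingHom.comp_apply, Ideal.Quotient.eq, hmap]
    apply mem_ideal_of_constantCoeff
    have hC : (φ : Rxyz →+* Rxyz) (C (constantCoeff p)) = C (constantCoeff p) :=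
      φ.commutes (constantCoeff p)
    rw [hC]
    simp
  exact ⟨injective_of_surjective_noetherian _ hsurj, hsurj⟩

/-! ### The normal form -/

lemma add_pow_cross_term {A : Type*} [CommRing A] (w q : A) (k : ℕ) :
    ∃ B : A, (w + q) ^ (k + 1) = w ^ (k + 1) + q ^ (k + 1) + w * q * B := by
  induction k with
  | zero => exact ⟨0, by ring⟩
  | succ k ih =>
    obtain ⟨B, hB⟩ := ih
    refine ⟨w ^ k + q ^ k + (w + q) * B, ?_⟩
    rw [pow_succ, hB]
    ring

/-- The coordinates in which the equation takes its normal form. The exponent `2r - 1` is written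
`k + 1`, the exponent `5r - 5` is `k + 1 + (j + 1)`, and `3 * (k + 1) = 5 + (l + 1)`. -/
lemma exists_normal_form (k j l : ℕ) (hl : 3 * (k + 1) = 5 + (l + 1))
    (a b c : Rxyz) (ha : IsUnit a) (hb : IsUnit b) :
    ∃ α β γ s : Rxyz, IsUnit α ∧ IsUnit β ∧ IsUnit γ ∧
      a * X 0 ^ 2 + b * (X 1 ^ 2 * X 2 - X 2 ^ (k + 1)) +
          c * (X 1 ^ 5 - X 2 ^ (k + 1 + (j + 1))) =
        (α * X 0) ^ 2 + (β * X 1) ^ 2 * (γ * (X 2 - X 1 ^ 3 * s)) +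
          (γ * (X 2 - X 1 ^ 3 * s)) ^ (k + 1) := by
  obtain ⟨b', hb'⟩ := hb.exists_right_inv
  set u : Rxyz := b + c * X 2 ^ (j + 1) with hu
  have hbc := isUnit_iff_coeff.1 hb
  have huu : IsUnit u := by
    rw [isUnit_iff_coeff]
    simpa [hu] using hbc
  obtain ⟨s, hs⟩ := exists_fixedPoint_s7 k (-(c * b')) (e := u * b' * X 1 ^ (l + 1)) (by simp)
  have hs' : b * s + c - u * X 1 ^ (l + 1) * s ^ (k + 1) = 0 := by
    linear_combination b * hs + (u * X 1 ^ (l + 1) * s ^ (k + 1) - c) * hb'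
  set w : Rxyz := X 2 - X 1 ^ 3 * s with hw
  obtain ⟨B, hB⟩ := add_pow_cross_term w (X 1 ^ 3 * s) k
  have hz : w + X 1 ^ 3 * s = X 2 := by rw [hw]; ring
  rw [hz, mul_pow, ← pow_mul, hl] at hB
  obtain ⟨α, hα, hα2⟩ := exists_root_of_isUnit two_ne_zero ha
  obtain ⟨γ, hγ, hγn⟩ := exists_root_of_isUnit (Nat.succ_ne_zero k) huu.neg
  obtain ⟨gam_inv, hgam_inv⟩ := hγ.exists_right_inv
  have hv : IsUnit ((b - u * X 1 * s * B) * gam_inv) := by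
    refine IsUnit.mul ?_ (IsUnit.of_mul_eq_one γ (by rw [mul_comm, hgam_inv]))
    rw [isUnit_iff_coeff]
    simpa using hbc
  obtain ⟨β, hβ, hβ2⟩ := exists_root_of_isUnit two_ne_zero hv
  refine ⟨α, β, γ, s, hα, hβ, hγ, ?_⟩
  rw [← hw, mul_pow, mul_pow, mul_pow γ, hα2, hβ2, hγn]
  have hf : a * X 0 ^ 2 + b * (X 1 ^ 2 * X 2 - X 2 ^ (k + 1)) +
      c * (X 1 ^ 5 - X 2 ^ (k + 1 + (j + 1))) =
      a * X 0 ^ 2 + b * X 1 ^ 2 * X 2 + c * X 1 ^ 5 - u * X 2 ^ (k + 1) := by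
    rw [hu]
    ring
  rw [hf, hB]
  linear_combination (X 1 ^ 5 : Rxyz) * hs' - b * X 1 ^ 2 * hz
    - (b - u * X 1 * s * B) * X 1 ^ 2 * w * hgam_inv

/-- for `r ≥ 3` and units `a, b, c` of `ℂ⟦x,y,z⟧` (with `x = X 0`,
`y = X 1`, `z = X 2`), the singularity `a x² + b(y²z − z^{2r−1}) + c(y⁵ − z^{5r−5}) = 0`
is analytically isomorphic to the `D_{2r}` singularity `x² + y² z + z^{2r−1} = 0`. -/
theorem d2r_singularity_normalization (r : ℕ) (hr : 3 ≤ r)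
    (a b c : MvPowerSeries (Fin 3) ℂ) (ha : IsUnit a) (hb : IsUnit b) (hc : IsUnit c) :
    Nonempty
      ((MvPowerSeries (Fin 3) ℂ ⧸ Ideal.span
          {a * MvPowerSeries.X 0 ^ 2 +
            b * (MvPowerSeries.X 1 ^ 2 * MvPowerSeries.X 2 - MvPowerSeries.X 2 ^ (2 * r - 1)) +
            c * (MvPowerSeries.X 1 ^ 5 - MvPowerSeries.X 2 ^ (5 * r - 5))}) ≃ₐ[ℂ]
        (MvPowerSeries (Fin 3) ℂ ⧸ Ideal.span
          {(MvPowerSeries.X 0 : MvPowerSeries (Fin 3) ℂ) ^ 2 +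
            MvPowerSeries.X 1 ^ 2 * MvPowerSeries.X 2 +
            MvPowerSeries.X 2 ^ (2 * r - 1)})) := by
  obtain ⟨q, rfl⟩ := Nat.exists_eq_add_of_le hr
  have e1 : 2 * (3 + q) - 1 = (2 * q + 4) + 1 := by omega
  have e2 : 5 * (3 + q) - 5 = (2 * q + 4) + 1 + ((3 * q + 4) + 1) := by omega
  rw [e1, e2]
  obtain ⟨α, β, γ, s, hα, hβ, hγ, hf⟩ := exists_normal_form (2 * q + 4) (3 * q + 4) (6 * q + 9)
    (by omega) a b c ha hb
  rw [hf]
  let w : Fin 3 → Rxyz := ![α * X 0, β * X 1, γ * (X 2 - X 1 ^ 3 * s)]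
  have h0 : ∀ i, constantCoeff (w i) = 0 := by
    intro i
    fin_cases i <;> simp [w]
  have hmem : ∀ i, w i ∈ Ideal.span (Set.range w) := fun i => Ideal.subset_span ⟨i, rfl⟩
  have hX0 : (X 0 : Rxyz) ∈ Ideal.span (Set.range w) :=
    (Ideal.unit_mul_mem_iff_mem _ hα).1 (hmem 0)
  have hX1 : (X 1 : Rxyz) ∈ Ideal.span (Set.range w) :=
    (Ideal.unit_mul_mem_iff_mem _ hβ).1 (hmem 1)
  have hX2 : (X 2 : Rxyz) ∈ Ideal.span (Set.range w) := by
    have h2 : (X 2 - X 1 ^ 3 * s : Rxyz) ∈ Ideal.span (Set.range w) :=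
      (Ideal.unit_mul_mem_iff_mem _ hγ).1 (hmem 2)
    have h3 : (X 1 ^ 3 * s : Rxyz) ∈ Ideal.span (Set.range w) :=
      Ideal.mul_mem_right _ _ (Ideal.pow_mem_of_mem _ hX1 3 (by norm_num))
    simpa using add_mem h2 h3
  have hX : ∀ i, (X i : Rxyz) ∈ Ideal.span (Set.range w) := by
    intro i
    fin_cases i
    exacts [hX0, hX1, hX2]
  let Φ : Rxyz ≃ₐ[ℂ] Rxyz := AlgEquiv.ofBijective _ (substitution_bijective w h0 hX)
  have hΦ : ∀ i, Φ (X i) = w i := fun i => substAlgHom_X (hasSubst_of_constantCoeff_zero h0) i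
  refine ⟨(Ideal.quotientEquivAlg _ _ Φ ?_).symm⟩
  rw [Ideal.map_span, Set.image_singleton]
  congr 2
  change _ = Φ _
  simp only [map_add, map_mul, map_pow, hΦ]
  rfl
end

section
/- Let n ≥ 1 and let M be the A_n intersection matrix. Then for every vector s ∈ ℤⁿ with all entries ≥ 0 there exists a vector g ∈ ℤⁿ with all entries ≥ 0 such that the vector v = s + M g has all entries ≥ 0 and at most one nonzero entry, and any nonzero entry of v equals 1. -/
/-!
Think of `s` as chips on the interior vertices `1, …, n` of a path with end vertices `0` and `n + 1`,
where chips on an end vertex vanish. Adding `M g` adds the second difference of `g`, extended by zero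
to the ends. Two chips at `r ≤ j` can be pushed apart to `r - h` and `j + h`, with
`h = min r (n + 1 - j)`, by the second difference of a nonnegative trapezoid; at least one of them then
reaches an end vertex and disappears. Hence inserting the chips of `s` one at a time, always merging the
new chip with the at most one present, leaves at most one chip (`exists_reduction`).
-/

/-- The `A_n` intersection matrix: `M i i = -2`, `M i j = 1` if `|i - j| = 1`, else `0`
(vertices indexed by `Fin n`). -/
def AnMatrix (n : ℕ) : Matrix (Fin n) (Fin n) ℤ :=
  Matrix.of fun i j =>
    if i = j then -2
    else if (i : ℕ) + 1 = (j : ℕ) ∨ (j : ℕ) + 1 = (i : ℕ) then 1 else 0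

/-- `M g` is the second difference of `g`, when `g` is given by a sequence vanishing at both ends.
The vertex `i : Fin n` sits at position `i + 1`. -/
lemma AnMatrix_mulVec (n : ℕ) (G : ℕ → ℤ) (h0 : G 0 = 0) (h1 : G (n + 1) = 0) (i : Fin n) :
    (AnMatrix n).mulVec (fun k => G (k + 1)) i = G i - 2 * G (i + 1) + G (i + 2) := by
  have hi := i.2
  have key : ∀ k : Fin n, AnMatrix n i k * G (k + 1) =
      (if (i : ℕ) = k then -2 * G (k + 1) else 0) + (if (i : ℕ) + 1 = k then G (k + 1) else 0)
        + (if (i : ℕ) = k + 1 then G (k + 1) else 0) := by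
    intro k
    simp only [AnMatrix, Matrix.of_apply, Fin.ext_iff]
    split_ifs <;> omega
  have e3 : ∑ k ∈ Finset.range n, (if (i : ℕ) = k + 1 then G (k + 1) else 0) = G i := by
    rcases hm : (i : ℕ) with _ | m
    · simp [h0]
    · have : m < n := by omega
      simp [this]
  have e2 : ∑ k ∈ Finset.range n, (if (i : ℕ) + 1 = k then G (k + 1) else 0) = G (i + 2) := by
    rw [Finset.sum_ite_eq]
    split_ifs with h
    · rfl
    · have : (i : ℕ) + 2 = n + 1 := by simp at h; omega
      rw [this, h1]
  have e1 : ∑ k ∈ Finset.range n, (if (i : ℕ) = k then -2 * G (k + 1) else 0)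
      = -2 * G (i + 1) := by
    rw [Finset.sum_ite_eq, if_pos (by simp)]
  simp only [Matrix.mulVec, dotProduct, key]
  rw [Fin.sum_univ_eq_sum_range (fun k => (if (i : ℕ) = k then -2 * G (k + 1) else 0)
    + (if (i : ℕ) + 1 = k then G (k + 1) else 0) + (if (i : ℕ) = k + 1 then G (k + 1) else 0)) n,
    Finset.sum_add_distrib, Finset.sum_add_distrib, e1, e2, e3]
  ring

/-- One chip at position `r`; this is the zero vector when `r = 0` or `r = n + 1`. -/
def chip (n r : ℕ) : Fin n → ℤ := fun i => if (i : ℕ) + 1 = r then 1 else 0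

/-- The function `k ↦ max 0 (k - a)`, expressed by truncated subtraction. -/
def ramp (a k : ℕ) : ℤ := ((k - a : ℕ) : ℤ)

lemma ramp_second_diff (a m : ℕ) :
    ramp a m - 2 * ramp a (m + 1) + ramp a (m + 2) = if m + 1 = a then 1 else 0 := by
  simp only [ramp]
  split_ifs <;> omega

lemma merge_chips_of_le (n r j : ℕ) (hrj : r ≤ j) (hj : j ≤ n + 1) :
    ∃ t ≤ n + 1, ∃ g : Fin n → ℤ, (∀ i, 0 ≤ g i) ∧
      chip n r + chip n j + (AnMatrix n).mulVec g = chip n t := by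
  obtain ⟨h, hh⟩ : ∃ h, h = min r (n + 1 - j) := ⟨_, rfl⟩
  -- The trapezoid of height `h` supported on `[r - h, j + h]`, with corners at `r` and `j`.
  let G : ℕ → ℤ := fun k => ramp (r - h) k - ramp r k - ramp j k + ramp (j + h) k
  have h0 : G 0 = 0 := by simp only [G, ramp]; omega
  have h1 : G (n + 1) = 0 := by simp only [G, ramp]; omega
  -- The chip not absorbed at an end: at `j + h` if `h = r`, at `r - h` otherwise.
  refine ⟨if h = r then j + h else r - h, by split_ifs <;> omega, fun k => G (k + 1),
    fun i => by simp only [G, ramp]; omega, ?_⟩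
  funext i
  have hi := i.2
  rw [Pi.add_apply, Pi.add_apply, AnMatrix_mulVec n G h0 h1]
  have a1 := ramp_second_diff (r - h) i
  have a2 := ramp_second_diff r i
  have a3 := ramp_second_diff j i
  have a4 := ramp_second_diff (j + h) i
  have hval : chip n r i + chip n j i + (G i - 2 * G (i + 1) + G (i + 2)) =
      (if (i : ℕ) + 1 = r - h then 1 else 0) + (if (i : ℕ) + 1 = j + h then 1 else 0) := by
    simp only [chip, G]
    linarith
  rw [hval]
  simp only [chip]
  split_ifs <;> omega

lemma merge_chips (n r j : ℕ) (hr : r ≤ n + 1) (hj : j ≤ n + 1) :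
    ∃ t ≤ n + 1, ∃ g : Fin n → ℤ, (∀ i, 0 ≤ g i) ∧
      chip n r + chip n j + (AnMatrix n).mulVec g = chip n t := by
  rcases le_total r j with h | h
  · exact merge_chips_of_le n r j h hj
  · rw [add_comm (chip n r)]
    exact merge_chips_of_le n j r h hr

/-- Induction on the total number `N` of chips. -/
lemma exists_reduction (n N : ℕ) : ∀ s : Fin n → ℤ, (∀ i, 0 ≤ s i) → ∑ i, s i = N →
    ∃ t ≤ n + 1, ∃ g : Fin n → ℤ, (∀ i, 0 ≤ g i) ∧
      s + (AnMatrix n).mulVec g = chip n t := by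
  induction N with
  | zero =>
    intro s hs hsum
    have hz := (Finset.sum_eq_zero_iff_of_nonneg (fun i _ => hs i)).1 (by simpa using hsum)
    refine ⟨0, by omega, 0, by simp, ?_⟩
    funext i
    simp [chip, hz i (Finset.mem_univ i)]
  | succ N ih =>
    intro s hs hsum
    obtain ⟨j, -, hj⟩ : ∃ j ∈ Finset.univ, s j ≠ 0 :=
      Finset.exists_ne_zero_of_sum_ne_zero (by rw [hsum]; positivity)
    have hc : chip n (j + 1) = Pi.single j 1 := by
      funext i
      simp [chip, Pi.single_apply, Fin.ext_iff]
    obtain ⟨r, hr, g, hg, hgs⟩ := ih (s - chip n (j + 1))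
      (by
        intro i
        have := hs i
        rw [hc, Pi.sub_apply, Pi.single_apply]
        split_ifs with h
        · subst h; omega
        · omega)
      (by simp [hc, Finset.sum_sub_distrib, hsum])
    obtain ⟨t, ht, g', hg', hgt⟩ := merge_chips n r (j + 1) hr (by omega)
    refine ⟨t, ht, g + g', fun i => add_nonneg (hg i) (hg' i), ?_⟩
    rw [← hgt, ← hgs, Matrix.mulVec_add]
    abel

/-- for the `A_n` intersection matrix `M`, any nonnegative integer vector `s`
can be moved by adding `M g` (`g` nonnegative) to a nonnegative vector with at most one
nonzero entry, that entry being `1`. -/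
theorem an_admissible_reduction (n : ℕ) (hn : 1 ≤ n)
    (s : Fin n → ℤ) (hs : ∀ i, 0 ≤ s i) :
    ∃ g : Fin n → ℤ, (∀ i, 0 ≤ g i) ∧
      (∀ i, 0 ≤ (s + (AnMatrix n).mulVec g) i) ∧
      (∀ i j, (s + (AnMatrix n).mulVec g) i ≠ 0 →
        (s + (AnMatrix n).mulVec g) j ≠ 0 → i = j) ∧
      (∀ i, (s + (AnMatrix n).mulVec g) i ≠ 0 → (s + (AnMatrix n).mulVec g) i = 1) := by
  obtain ⟨N, hN⟩ := Int.eq_ofNat_of_zero_le (Finset.sum_nonneg fun i (_ : i ∈ Finset.univ) => hs i)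
  obtain ⟨t, -, g, hg, h⟩ := exists_reduction n N s hs hN
  refine ⟨g, hg, ?_⟩
  rw [h]
  simp only [chip]
  refine ⟨fun i => by split_ifs <;> simp, fun i j hi hj => ?_, fun i hi => ?_⟩
  · simp only [ne_eq, ite_eq_right_iff, one_ne_zero, imp_false, not_not] at hi hj
    exact Fin.ext (by omega)
  · simpa using hi
end

section
/- Let n ≥ 4 and let M be the D_n intersection matrix. Then for every vector s ∈ ℤⁿ with all entries ≥ 0 there exists a vector g ∈ ℤⁿ with all entries ≥ 0 such that the vector v = s + M g has all entries ≥ 0, at most one nonzero entry, any nonzero entry of v equals 1, and any index i with v_i = 1 belongs to {1, n−1, n}. -/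
/-!
Call `s ~> v` when `v = s + M g` for some `g ≥ 0`. This relation is reflexive, transitive and
compatible with addition. Write `e i` for the `i`-th unit vector and `e 0 = 0`. Since `s` is a sum
of unit vectors, induction on the sum of the entries of `s` reduces the theorem to two facts, with
`c` ranging over `{0, 1, n-1, n}`:

* every `e i` reduces to some `e c` (`reach_single`): for `2 ≤ i ≤ n - 2` one has
  `e i ~> e (i-2)`, using the positive root `ε_{i-1} + ε_i` of `D_n` as `g`;
* every `e a + e b` with `a, b` in `{0, 1, n-1, n}` reduces to some `e c` (`reach_pair`), again by
  subtracting an explicit positive root and possibly applying the first fact.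

All vectors are functions on `ℕ` whose values at `1, …, n` are the only relevant ones.
-/

/-- The edge relation of the `D_n` Dynkin diagram on vertices `1,…,n` (as an ordered
pair `(I,J)`): the edges are `{i, i+1}` for `1 ≤ i ≤ n−3` together with `{n−2, n−1}`
and `{n−2, n}`. -/
def DnAdj (n I J : ℕ) : Prop :=
  (J = I + 1 ∧ 1 ≤ I ∧ I ≤ n - 3) ∨ (I = n - 2 ∧ (J = n - 1 ∨ J = n))

instance (n I J : ℕ) : Decidable (DnAdj n I J) := by unfold DnAdj; infer_instance

/-- The `D_n` intersection matrix: `M i i = -2`, `M i j = 1` if `{i,j}` is an edge of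
the `D_n` Dynkin diagram, else `0` (vertex `i : Fin n` corresponds to vertex `i + 1`
of the diagram). -/
def DnMatrix (n : ℕ) : Matrix (Fin n) (Fin n) ℤ :=
  Matrix.of fun i j =>
    if i = j then -2
    else if DnAdj n ((i : ℕ) + 1) ((j : ℕ) + 1) ∨ DnAdj n ((j : ℕ) + 1) ((i : ℕ) + 1)
      then 1 else 0

/-- The `k`-th entry (`1 ≤ k ≤ n`) of `M f`, for `M` the `D_n` intersection matrix and
`f` indexed by `1, …, n`. -/
def dnApply (n : ℕ) (f : ℕ → ℤ) (k : ℕ) : ℤ :=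
  -2 * f k + (if 2 ≤ k ∧ k ≤ n - 1 then f (k - 1) else 0) + (if k ≤ n - 2 then f (k + 1) else 0)
    + (if k = n - 2 then f n else 0) + (if k = n then f (n - 2) else 0)

/-- The `i`-th unit vector, on the index set `1, …, n`; in particular `dnUnit 0` stands for the
zero vector. -/
def dnUnit (i k : ℕ) : ℤ := if k = i then 1 else 0

/-- `v = s + M f` on the indices `1, …, n` for some nonnegative `f`. -/
def DnReach (n : ℕ) (s v : ℕ → ℤ) : Prop :=
  ∃ f : ℕ → ℤ, (∀ k, 0 ≤ f k) ∧ ∀ k, 1 ≤ k → k ≤ n → v k = s k + dnApply n f k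

lemma mulVec_eq_dnApply (n : ℕ) (hn : 4 ≤ n) (f : ℕ → ℤ) (i : Fin n) :
    (DnMatrix n).mulVec (fun j => f (j + 1)) i = dnApply n f (i + 1) := by
  obtain ⟨k, hk⟩ := i
  have entry : ∀ j : Fin n, DnMatrix n ⟨k, hk⟩ j * f (j + 1) =
      (if (j : ℕ) = k then -2 * f (k + 1) else 0)
      + (if (j : ℕ) = k - 1 then (if 2 ≤ k + 1 ∧ k + 1 ≤ n - 1 then f k else 0) else 0)
      + (if (j : ℕ) = k + 1 then (if k + 1 ≤ n - 2 then f (k + 2) else 0) else 0)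
      + (if (j : ℕ) = n - 1 then (if k + 1 = n - 2 then f n else 0) else 0)
      + (if (j : ℕ) = n - 3 then (if k + 1 = n then f (n - 2) else 0) else 0) := by
    rintro ⟨j, hj⟩
    simp only [DnMatrix, DnAdj, Matrix.of_apply, Fin.mk.injEq]
    grind
  have pick : ∀ (m : ℕ) (x : ℤ), m < n → ∑ j : Fin n, (if (j : ℕ) = m then x else 0) = x := by
    intro m x hm
    rw [Finset.sum_eq_single (⟨m, hm⟩ : Fin n)]
    · simp
    · intro b _ hb
      exact if_neg fun h => hb (Fin.ext h)
    · simp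
  have pick0 : ∀ m : ℕ, ∑ j : Fin n, (if (j : ℕ) = m then (0 : ℤ) else 0) = 0 := by simp
  simp only [Matrix.mulVec, dotProduct, entry, Finset.sum_add_distrib]
  rw [pick k _ hk, pick (k - 1) _ (by omega), pick (n - 1) _ (by omega), pick (n - 3) _ (by omega)]
  have hlast : ∑ j : Fin n, (if (j : ℕ) = k + 1 then (if k + 1 ≤ n - 2 then f (k + 2) else 0) else 0)
      = if k + 1 ≤ n - 2 then f (k + 2) else 0 := by
    by_cases h : k + 1 ≤ n - 2
    · exact pick _ _ (by omega)
    · simp only [if_neg h, pick0]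
  rw [hlast]
  rfl

lemma dnApply_add (n : ℕ) (f g : ℕ → ℤ) (k : ℕ) :
    dnApply n (fun j => f j + g j) k = dnApply n f k + dnApply n g k := by
  unfold dnApply
  split_ifs <;> ring

lemma DnReach.refl (n : ℕ) (s : ℕ → ℤ) : DnReach n s s :=
  ⟨fun _ => 0, fun _ => le_rfl, fun k _ _ => by simp [dnApply]⟩

lemma DnReach.trans {n : ℕ} {s t v : ℕ → ℤ} (h₁ : DnReach n s t) (h₂ : DnReach n t v) :
    DnReach n s v := by
  obtain ⟨f, hf, hst⟩ := h₁
  obtain ⟨g, hg, htv⟩ := h₂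
  refine ⟨fun j => f j + g j, fun j => add_nonneg (hf j) (hg j), fun k h1 hk => ?_⟩
  rw [dnApply_add, htv k h1 hk, hst k h1 hk]
  ring

lemma DnReach.add {n : ℕ} {s s' v v' : ℕ → ℤ} (h₁ : DnReach n s v) (h₂ : DnReach n s' v') :
    DnReach n (s + s') (v + v') := by
  obtain ⟨f, hf, hsv⟩ := h₁
  obtain ⟨g, hg, hsv'⟩ := h₂
  refine ⟨fun j => f j + g j, fun j => add_nonneg (hf j) (hg j), fun k h1 hk => ?_⟩
  rw [dnApply_add, Pi.add_apply, Pi.add_apply, hsv k h1 hk, hsv' k h1 hk]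
  ring

lemma DnReach.of_eq {n : ℕ} {s v : ℕ → ℤ} (h : ∀ k, 1 ≤ k → k ≤ n → v k = s k) :
    DnReach n s v :=
  ⟨fun _ => 0, fun _ => le_rfl, fun k h1 hk => by simp [dnApply, h k h1 hk]⟩

/-- The positive root used is `α_{i-1} + 2α_i + ⋯ + 2α_{n-2} + α_{n-1} + α_n`. -/
lemma reach_step {n i : ℕ} (hi : 2 ≤ i) (hin : i ≤ n - 2) :
    DnReach n (dnUnit i) (dnUnit (i - 2)) := by
  refine ⟨fun k => if k < i - 1 then 0 else if k = i - 1 ∨ n - 1 ≤ k then 1 else 2,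
    fun k => by dsimp only; split_ifs <;> norm_num, fun k h1 hk => ?_⟩
  simp only [dnApply, dnUnit]
  grind

lemma reach_low {n : ℕ} : ∀ i, i ≤ n - 2 → ∃ c ≤ 1, DnReach n (dnUnit i) (dnUnit c) := by
  intro i
  induction i using Nat.strong_induction_on with
  | _ i ih =>
    intro hin
    by_cases hi : i ≤ 1
    · exact ⟨i, hi, DnReach.refl _ _⟩
    · obtain ⟨c, hc, h⟩ := ih (i - 2) (by omega) (by omega)
      exact ⟨c, hc, (reach_step (by omega) hin).trans h⟩

/-- The indices of the allowed end vectors: the admissible ones, and `0` for the zero vector. -/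
def DnAdm (n c : ℕ) : Prop := c = 0 ∨ c = 1 ∨ c = n - 1 ∨ c = n

lemma reach_single {n i : ℕ} (hin : i ≤ n) : ∃ c, DnAdm n c ∧ DnReach n (dnUnit i) (dnUnit c) := by
  by_cases h : i ≤ n - 2
  · obtain ⟨c, hc, hr⟩ := reach_low i h
    exact ⟨c, by unfold DnAdm; omega, hr⟩
  · exact ⟨i, by unfold DnAdm; omega, DnReach.refl _ _⟩

/-- Twice an end vertex reduces to its neighbour, by subtracting the simple root there. -/
lemma reach_double {n a b : ℕ} (hn : 4 ≤ n)
    (h : (a = 1 ∧ b = 2) ∨ (a = n - 1 ∧ b = n - 2) ∨ (a = n ∧ b = n - 2)) :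
    DnReach n (dnUnit a + dnUnit a) (dnUnit b) := by
  refine ⟨fun k => if k = a then 1 else 0, fun k => by dsimp only; split_ifs <;> norm_num, fun k h1 hk => ?_⟩
  simp only [dnApply, dnUnit, Pi.add_apply]
  grind

/-- The two spin vertices reduce to vertex `n - 3`, by the root `α_{n-2} + α_{n-1} + α_n`. -/
lemma reach_spins {n : ℕ} (hn : 4 ≤ n) :
    DnReach n (dnUnit (n - 1) + dnUnit n) (dnUnit (n - 3)) := by
  refine ⟨fun k => if n - 2 ≤ k then 1 else 0, fun k => by dsimp only; split_ifs <;> norm_num,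
    fun k h1 hk => ?_⟩
  simp only [dnApply, dnUnit, Pi.add_apply]
  grind

/-- Vertex `1` together with a spin vertex reduces to the other spin vertex, by the root
`α_1 + ⋯ + α_{n-2} + α_a`. -/
lemma reach_vector_spin {n a b : ℕ} (hn : 4 ≤ n)
    (h : (a = n - 1 ∧ b = n) ∨ (a = n ∧ b = n - 1)) :
    DnReach n (dnUnit 1 + dnUnit a) (dnUnit b) := by
  refine ⟨fun k => if k = b then 0 else 1, fun k => by dsimp only; split_ifs <;> norm_num,
    fun k h1 hk => ?_⟩
  simp only [dnApply, dnUnit, Pi.add_apply]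
  grind

lemma reach_pair {n a b : ℕ} (hn : 4 ≤ n) (ha : DnAdm n a) (hb : DnAdm n b) :
    ∃ c, DnAdm n c ∧ DnReach n (dnUnit a + dnUnit b) (dnUnit c) := by
  suffices h : ∃ i ≤ n, DnReach n (dnUnit a + dnUnit b) (dnUnit i) by
    obtain ⟨i, hi, hr⟩ := h
    obtain ⟨c, hc, hr'⟩ := reach_single hi
    exact ⟨c, hc, hr.trans hr'⟩
  have zero_left : ∀ x, DnReach n (dnUnit 0 + dnUnit x) (dnUnit x) := fun x =>
    DnReach.of_eq fun k h1 _ => by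
      simp [dnUnit, show k ≠ 0 by omega]
  rcases ha with rfl | rfl | rfl | rfl <;> rcases hb with rfl | rfl | rfl | rfl
  · exact ⟨0, by omega, zero_left _⟩
  · exact ⟨1, by omega, zero_left _⟩
  · exact ⟨n - 1, by omega, zero_left _⟩
  · exact ⟨b, by omega, zero_left _⟩
  · exact ⟨1, by omega, add_comm (dnUnit 0) (dnUnit 1) ▸ zero_left _⟩
  · exact ⟨2, by omega, reach_double hn (by omega)⟩
  · exact ⟨n, by omega, reach_vector_spin hn (by omega)⟩
  · exact ⟨b - 1, by omega, reach_vector_spin hn (by omega)⟩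
  · exact ⟨n - 1, by omega, add_comm (dnUnit 0) _ ▸ zero_left _⟩
  · exact ⟨n, by omega, add_comm (dnUnit 1) _ ▸ reach_vector_spin hn (by omega)⟩
  · exact ⟨n - 2, by omega, reach_double hn (by omega)⟩
  · exact ⟨b - 3, by omega, reach_spins hn⟩
  · exact ⟨a, by omega, add_comm (dnUnit 0) _ ▸ zero_left _⟩
  · exact ⟨a - 1, by omega, add_comm (dnUnit 1) _ ▸ reach_vector_spin hn (by omega)⟩
  · exact ⟨a - 3, by omega, add_comm (dnUnit (a - 1)) _ ▸ reach_spins hn⟩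
  · exact ⟨b - 2, by omega, reach_double hn (by omega)⟩

lemma reach_all {n : ℕ} (hn : 4 ≤ n) (N : ℕ) : ∀ s : ℕ → ℤ, (∀ k, 0 ≤ s k) →
    ∑ k ∈ Finset.Icc 1 n, s k = N → ∃ c, DnAdm n c ∧ DnReach n s (dnUnit c) := by
  induction N with
  | zero =>
    intro s hs hsum
    have h0 := (Finset.sum_eq_zero_iff_of_nonneg fun k _ => hs k).1 (by simpa using hsum)
    refine ⟨0, Or.inl rfl, DnReach.of_eq fun k h1 hk => ?_⟩
    rw [h0 k (Finset.mem_Icc.2 ⟨h1, hk⟩)]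
    simp [dnUnit, show k ≠ 0 by omega]
  | succ N ih =>
    intro s hs hsum
    obtain ⟨i, hi, hpos⟩ : ∃ i ∈ Finset.Icc 1 n, s i ≠ 0 :=
      Finset.exists_ne_zero_of_sum_ne_zero (by rw [hsum]; positivity)
    have hnonneg : ∀ k, 0 ≤ (s - dnUnit i) k := by
      intro k
      have := hs k
      simp only [Pi.sub_apply, dnUnit]
      split_ifs with h
      · subst h; omega
      · omega
    obtain ⟨a, ha, hra⟩ := ih (s - dnUnit i) hnonneg (by
      simp only [Pi.sub_apply, Finset.sum_sub_distrib, hsum, dnUnit, Finset.sum_ite_eq', if_pos hi]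
      push_cast
      ring)
    obtain ⟨b, hb, hrb⟩ := reach_single (Finset.mem_Icc.1 hi).2
    obtain ⟨c, hc, hrc⟩ := reach_pair hn ha hb
    have h := (hra.add hrb).trans hrc
    rw [sub_add_cancel] at h
    exact ⟨c, hc, h⟩

/-- for the `D_n` intersection matrix `M`, any nonnegative integer vector
`s` can be moved by adding `M g` (`g` nonnegative) to a nonnegative vector with at most
one nonzero entry, that entry being `1` and occurring only at an admissible index
(vertex `1`, `n−1` or `n` of the diagram). -/
theorem dn_admissible_reduction (n : ℕ) (hn : 4 ≤ n)
    (s : Fin n → ℤ) (hs : ∀ i, 0 ≤ s i) :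
    ∃ g : Fin n → ℤ, (∀ i, 0 ≤ g i) ∧
      (∀ i, 0 ≤ (s + (DnMatrix n).mulVec g) i) ∧
      (∀ i j, (s + (DnMatrix n).mulVec g) i ≠ 0 →
        (s + (DnMatrix n).mulVec g) j ≠ 0 → i = j) ∧
      (∀ i, (s + (DnMatrix n).mulVec g) i ≠ 0 → (s + (DnMatrix n).mulVec g) i = 1) ∧
      (∀ i, (s + (DnMatrix n).mulVec g) i = 1 →
        ((i : ℕ) + 1 = 1 ∨ (i : ℕ) + 1 = n - 1 ∨ (i : ℕ) + 1 = n)) := by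
  -- `s` as a vector indexed by `1, …, n`, extended by zero.
  let S : ℕ → ℤ := fun k => if h : k - 1 < n then s ⟨k - 1, h⟩ else 0
  have hS : ∀ k, 0 ≤ S k := by
    intro k
    simp only [S]
    split_ifs
    · exact hs _
    · exact le_rfl
  obtain ⟨c, hc, f, hf, hv⟩ := reach_all hn (∑ k ∈ Finset.Icc 1 n, S k).toNat S hS
    (Int.toNat_of_nonneg (Finset.sum_nonneg fun k _ => hS k)).symm
  have key : ∀ i : Fin n, (s + (DnMatrix n).mulVec fun j => f (j + 1)) i
      = if (i : ℕ) + 1 = c then 1 else 0 := by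
    intro i
    have h := hv (i + 1) (by omega) (by omega)
    have hSi : S (i + 1) = s i := by simp [S]
    rw [Pi.add_apply, mulVec_eq_dnApply n hn, ← hSi, ← h]
    rfl
  refine ⟨fun j => f (j + 1), fun _ => hf _, ?_, ?_, ?_, ?_⟩
  · intro i
    rw [key]
    split_ifs <;> norm_num
  · intro i j hi hj
    rw [key] at hi hj
    have := (ite_ne_right_iff.1 hi).1
    have := (ite_ne_right_iff.1 hj).1
    exact Fin.ext (by omega)
  · intro i hi
    rw [key] at hi ⊢
    exact if_pos (ite_ne_right_iff.1 hi).1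
  · intro i hi
    rw [key] at hi
    have hic : (i : ℕ) + 1 = c := by
      by_contra h
      simp [h] at hi
    unfold DnAdm at hc
    omega
end

section
/- Let M be the E_6 intersection matrix. Then for every vector s ∈ ℤ⁶ with all entries ≥ 0 there exists a vector g ∈ ℤ⁶ with all entries ≥ 0 such that the vector v = s + M g has all entries ≥ 0, at most one nonzero entry, any nonzero entry of v equals 1, and any index i with v_i = 1 belongs to {1, 6}. -/
/-!
The matrix `3 • (-E6Matrix)⁻¹` has positive integer entries, and the cokernel of `E6Matrix` is
`ℤ/3`, the class of `s` being `s 0 + 2 * s 1 + s 4 + 2 * s 5` modulo `3`. The target vector is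
therefore forced to be `v = 0`, `e₀` or `e₅` according to this class, and
`g = (-E6Matrix)⁻¹ (s - v)` is then integral. It is nonnegative because
`2 * s 0 + s 1 + 2 * s 4 + s 5` and `s 0 + 2 * s 1 + s 4 + 2 * s 5` are nonnegative and congruent
modulo `3` to `2` for `v = e₀`, respectively `v = e₅`, hence at least `2` there; this bound makes
`(-E6Matrix)⁻¹ s` dominate `(-E6Matrix)⁻¹ v` entrywise. `exists_e6_coordinates` carries this out
in coordinates.
-/

/-- The `E_6` intersection matrix: `M i i = -2`, `M i j = 1` if `{i,j}` is an edge of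
the `E_6` Dynkin diagram (edges `{1,2}, {2,3}, {3,4}, {3,5}, {5,6}` on vertices
`1,…,6`), else `0` (vertex `i : Fin 6` corresponds to vertex `i + 1`). -/
def E6Matrix : Matrix (Fin 6) (Fin 6) ℤ :=
  !![-2,  1,  0,  0,  0,  0;
      1, -2,  1,  0,  0,  0;
      0,  1, -2,  1,  1,  0;
      0,  0,  1, -2,  0,  0;
      0,  0,  1,  0, -2,  1;
      0,  0,  0,  0,  1, -2]

/-- The reduction in coordinates: the target `v = a e₀ + b e₅`, with `a, b ∈ {0, 1}` not both `1`,
satisfies `s + E6Matrix g = v` for some nonnegative integers `g₀, …, g₅`. -/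
lemma exists_e6_coordinates (s0 s1 s2 s3 s4 s5 : ℤ) (h0 : 0 ≤ s0) (h1 : 0 ≤ s1) (h2 : 0 ≤ s2)
    (h3 : 0 ≤ s3) (h4 : 0 ≤ s4) (h5 : 0 ≤ s5) :
    ∃ a b g0 g1 g2 g3 g4 g5 : ℤ,
      (a = 0 ∧ b = 0 ∨ a = 1 ∧ b = 0 ∨ a = 0 ∧ b = 1) ∧
      (0 ≤ g0 ∧ 0 ≤ g1 ∧ 0 ≤ g2 ∧ 0 ≤ g3 ∧ 0 ≤ g4 ∧ 0 ≤ g5) ∧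
      s0 + (-2 * g0 + g1) = a ∧
      s1 + (g0 - 2 * g1 + g2) = 0 ∧
      s2 + (g1 - 2 * g2 + g3 + g4) = 0 ∧
      s3 + (g2 - 2 * g3) = 0 ∧
      s4 + (g2 - 2 * g4 + g5) = 0 ∧
      s5 + (g4 - 2 * g5) = b := by
  obtain ⟨a, b, hab, hmod⟩ : ∃ a b : ℤ,
      (a = 0 ∧ b = 0 ∨ a = 1 ∧ b = 0 ∨ a = 0 ∧ b = 1) ∧
      (s0 + 2 * s1 + s4 + 2 * s5 - a - 2 * b) % 3 = 0 := by
    have hr : (s0 + 2 * s1 + s4 + 2 * s5) % 3 = 0 ∨ (s0 + 2 * s1 + s4 + 2 * s5) % 3 = 1 ∨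
        (s0 + 2 * s1 + s4 + 2 * s5) % 3 = 2 := by omega
    rcases hr with hr | hr | hr
    · exact ⟨0, 0, by simp, by omega⟩
    · exact ⟨1, 0, by simp, by omega⟩
    · exact ⟨0, 1, by simp, by omega⟩
  have ha : 2 * a ≤ 2 * s0 + s1 + 2 * s4 + s5 := by omega
  have hb : 2 * b ≤ s0 + 2 * s1 + s4 + 2 * s5 := by omega
  -- The coefficients are the rows of `3 • (-E6Matrix)⁻¹`; all these divisions are exact,
  -- and the third and fourth rows are already divisible by `3`.
  refine ⟨a, b,
    (4 * (s0 - a) + 5 * s1 + 6 * s2 + 3 * s3 + 4 * s4 + 2 * (s5 - b)) / 3,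
    (5 * (s0 - a) + 10 * s1 + 12 * s2 + 6 * s3 + 8 * s4 + 4 * (s5 - b)) / 3,
    2 * (s0 - a) + 4 * s1 + 6 * s2 + 3 * s3 + 4 * s4 + 2 * (s5 - b),
    (s0 - a) + 2 * s1 + 3 * s2 + 2 * s3 + 2 * s4 + (s5 - b),
    (4 * (s0 - a) + 8 * s1 + 12 * s2 + 6 * s3 + 10 * s4 + 5 * (s5 - b)) / 3,
    (2 * (s0 - a) + 4 * s1 + 6 * s2 + 3 * s3 + 5 * s4 + 4 * (s5 - b)) / 3,
    hab, ⟨?_, ?_, ?_, ?_, ?_, ?_⟩, ?_, ?_, ?_, ?_, ?_, ?_⟩ <;> omega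

/-- for the `E_6` intersection matrix `M`, any nonnegative integer vector
`s` can be moved by adding `M g` (`g` nonnegative) to a nonnegative vector with at most
one nonzero entry, that entry being `1` and occurring only at an admissible index
(vertex `1` or `6` of the diagram). -/
theorem e6_admissible_reduction (s : Fin 6 → ℤ) (hs : ∀ i, 0 ≤ s i) :
    ∃ g : Fin 6 → ℤ, (∀ i, 0 ≤ g i) ∧
      (∀ i, 0 ≤ (s + E6Matrix.mulVec g) i) ∧
      (∀ i j, (s + E6Matrix.mulVec g) i ≠ 0 → (s + E6Matrix.mulVec g) j ≠ 0 → i = j) ∧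
      (∀ i, (s + E6Matrix.mulVec g) i ≠ 0 → (s + E6Matrix.mulVec g) i = 1) ∧
      (∀ i, (s + E6Matrix.mulVec g) i = 1 → (i = 0 ∨ i = 5)) := by
  obtain ⟨a, b, g0, g1, g2, g3, g4, g5, hab, ⟨p0, p1, p2, p3, p4, p5⟩, e0, e1, e2, e3, e4, e5⟩ :=
    exists_e6_coordinates (s 0) (s 1) (s 2) (s 3) (s 4) (s 5)
      (hs 0) (hs 1) (hs 2) (hs 3) (hs 4) (hs 5)
  have hv : s + E6Matrix.mulVec ![g0, g1, g2, g3, g4, g5] = ![a, 0, 0, 0, 0, b] := by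
    ext i
    fin_cases i <;> simp [E6Matrix] <;> linarith
  refine ⟨![g0, g1, g2, g3, g4, g5], ?_, ?_⟩
  · intro i
    fin_cases i <;> simpa
  · rw [hv]
    rcases hab with ⟨rfl, rfl⟩ | ⟨rfl, rfl⟩ | ⟨rfl, rfl⟩ <;> decide
end

section
/- Let M be the E_7 intersection matrix. Then for every vector s ∈ ℤ⁷ with all entries ≥ 0 there exists a vector g ∈ ℤ⁷ with all entries ≥ 0 such that the vector v = s + M g has all entries ≥ 0, at most one nonzero entry, any nonzero entry of v equals 1, and any index i with v_i = 1 equals 1. -/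
/-!
The discriminant group of the `E_7` lattice is `ℤ/2`, and the class of `s` in it is the parity
of `s 0 + s 2 + s 4`. Writing `s 0 + s 2 + s 4 = r + 2 * q` with `r ∈ {0, 1}`, the vector
`s - r • e₀` lies in the image of `M`, and its preimage `g = -M⁻¹ (s - r • e₀)` has entries that
are nonnegative integer combinations of `q` and the `s i`. Hence `s + M g = r • e₀`.
-/

/-- The `E_7` intersection matrix: `M i i = -2`, `M i j = 1` if `{i,j}` is an edge of
the `E_7` Dynkin diagram (edges `{1,2}, {2,3}, {3,4}, {4,5}, {4,6}, {6,7}` on vertices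
`1,…,7`), else `0` (vertex `i : Fin 7` corresponds to vertex `i + 1`). -/
def E7Matrix : Matrix (Fin 7) (Fin 7) ℤ :=
  !![-2,  1,  0,  0,  0,  0,  0;
      1, -2,  1,  0,  0,  0,  0;
      0,  1, -2,  1,  0,  0,  0;
      0,  0,  1, -2,  1,  1,  0;
      0,  0,  0,  1, -2,  0,  0;
      0,  0,  0,  1,  0, -2,  1;
      0,  0,  0,  0,  0,  1, -2]

/-- for the `E_7` intersection matrix `M`, any nonnegative integer vector
`s` can be moved by adding `M g` (`g` nonnegative) to a nonnegative vector with at most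
one nonzero entry, that entry being `1` and occurring only at the unique admissible
index (vertex `1` of the diagram). -/
theorem e7_admissible_reduction (s : Fin 7 → ℤ) (hs : ∀ i, 0 ≤ s i) :
    ∃ g : Fin 7 → ℤ, (∀ i, 0 ≤ g i) ∧
      (∀ i, 0 ≤ (s + E7Matrix.mulVec g) i) ∧
      (∀ i j, (s + E7Matrix.mulVec g) i ≠ 0 → (s + E7Matrix.mulVec g) j ≠ 0 → i = j) ∧
      (∀ i, (s + E7Matrix.mulVec g) i ≠ 0 → (s + E7Matrix.mulVec g) i = 1) ∧
      (∀ i, (s + E7Matrix.mulVec g) i = 1 → i = 0) := by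
  obtain ⟨r, q, hr, hq, h⟩ : ∃ r q : ℤ, (r = 0 ∨ r = 1) ∧ 0 ≤ q ∧ s 0 + s 2 + s 4 = r + 2 * q := by
    have h0 := hs 0
    have h2 := hs 2
    have h4 := hs 4
    exact ⟨(s 0 + s 2 + s 4) % 2, (s 0 + s 2 + s 4) / 2, by omega, by omega, by omega⟩
  -- `-M⁻¹ (s - r • e₀)`, with `s 0` eliminated in favour of `q`
  let g : Fin 7 → ℤ :=
    ![3 * q + 2 * s 1 + s 2 + 3 * s 3 + 2 * s 5 + s 6,
      4 * q + 4 * s 1 + 3 * s 2 + 6 * s 3 + s 4 + 4 * s 5 + 2 * s 6,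
      5 * q + 5 * s 1 + 5 * s 2 + 9 * s 3 + 2 * s 4 + 6 * s 5 + 3 * s 6,
      6 * q + 6 * s 1 + 6 * s 2 + 12 * s 3 + 3 * s 4 + 8 * s 5 + 4 * s 6,
      3 * q + 3 * s 1 + 3 * s 2 + 6 * s 3 + 2 * s 4 + 4 * s 5 + 2 * s 6,
      4 * q + 4 * s 1 + 4 * s 2 + 8 * s 3 + 2 * s 4 + 6 * s 5 + 3 * s 6,
      2 * q + 2 * s 1 + 2 * s 2 + 4 * s 3 + s 4 + 3 * s 5 + 2 * s 6]
  have hg : ∀ i, 0 ≤ g i := by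
    have h1 := hs 1
    have h2 := hs 2
    have h3 := hs 3
    have h4 := hs 4
    have h5 := hs 5
    have h6 := hs 6
    intro i
    fin_cases i <;> simp [g] <;> positivity
  have hv : s + E7Matrix.mulVec g = Pi.single 0 r := by
    funext i
    fin_cases i <;> simp [g, E7Matrix] <;> linarith
  refine ⟨g, hg, ?_⟩
  rw [hv]
  rcases hr with rfl | rfl
  · simp
  · decide
end

section
/- Let n ≥ 4 and let M be the D_n intersection matrix. The vector c ∈ ℤⁿ with c_1 = 1, c_i = 2 for 2 ≤ i ≤ n−2, and c_{n−1} = c_n = 1 satisfies (M c)_i ≤ 0 for every i, and every nonzero vector d ∈ ℤⁿ with all entries ≥ 0 satisfying (M d)_i ≤ 0 for every i satisfies d_i ≥ c_i for every i. Hence c is the fundamental cycle of D_n. -/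
/-- The fundamental cycle `(1,2,2,…,2,1,1)` of `D_n` (vertex `i : Fin n` corresponds
to vertex `i + 1` of the diagram). -/
def DnFundCycle (n : ℕ) : Fin n → ℤ := fun i =>
  if (i : ℕ) + 1 = 1 ∨ (i : ℕ) + 1 = n - 1 ∨ (i : ℕ) + 1 = n then 1 else 2

/-- The rows of the intersection matrix, with vertices numbered from `0`: the terms are the vertex
itself, its neighbours on the path `0, …, n - 2`, and the extra edge `{n - 3, n - 1}`. -/
lemma DnMatrix_mulVec (n : ℕ) (hn : 4 ≤ n) (e : ℕ → ℤ) (i : Fin n) :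
    (DnMatrix n).mulVec (fun j => e j) i =
      -2 * e i + (if 1 ≤ (i : ℕ) ∧ (i : ℕ) ≤ n - 2 then e (i - 1) else 0)
        + (if (i : ℕ) ≤ n - 3 then e (i + 1) else 0)
        + (if (i : ℕ) = n - 1 then e (n - 3) else 0)
        + (if (i : ℕ) = n - 3 then e (n - 1) else 0) := by
  obtain ⟨k, hk⟩ := i
  have single (a : ℕ) (p : Prop) [Decidable p] (ha : p → a < n) :
      (if p then e a else 0) = ∑ j ∈ Finset.range n, if j = a ∧ p then e j else 0 := by
    by_cases hp : p
    · simp [hp, ha hp]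
    · simp [hp]
  have hdiag : -2 * e k = ∑ j ∈ Finset.range n, if j = k then -2 * e j else 0 := by
    simp [hk]
  simp only [Matrix.mulVec, dotProduct, DnMatrix, Matrix.of_apply, Fin.ext_iff]
  rw [Fin.sum_univ_eq_sum_range (fun j => (if k = j then (-2 : ℤ)
    else if DnAdj n (k + 1) (j + 1) ∨ DnAdj n (j + 1) (k + 1) then 1 else 0) * e j) n,
    hdiag, single (k - 1) _ (by omega), single (k + 1) _ (by omega),
    single (n - 3) _ (by omega), single (n - 1) _ (by omega), ← Finset.sum_add_distrib,
    ← Finset.sum_add_distrib, ← Finset.sum_add_distrib, ← Finset.sum_add_distrib]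
  refine Finset.sum_congr rfl fun j hj => ?_
  rw [Finset.mem_range] at hj
  unfold DnAdj
  by_cases hjk : j = k
  · subst hjk
    rw [if_pos rfl, if_pos rfl, if_neg (by omega), if_neg (by omega), if_neg (by omega),
      if_neg (by omega)]
    ring
  · rw [if_neg (Ne.symm hjk), if_neg hjk]
    split_ifs <;> first | (exfalso; omega) | simp

/-- Minimality of the cycle, stated for sequences. -/
lemma Dn_lower_bound (n : ℕ) (hn : 4 ≤ n) (e : ℕ → ℤ) (hne : ∃ k < n, e k ≠ 0)
    (hpos : ∀ k < n, 0 ≤ e k)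
    (h0 : e 1 ≤ 2 * e 0)
    (hconc : ∀ k, k + 4 < n → e k + e (k + 2) ≤ 2 * e (k + 1))
    (hbranch : e (n - 4) + e (n - 2) + e (n - 1) ≤ 2 * e (n - 3))
    (hleaf : e (n - 3) ≤ 2 * e (n - 2)) (hleaf' : e (n - 3) ≤ 2 * e (n - 1)) :
    1 ≤ e 0 ∧ (∀ k, k + 4 ≤ n → 2 ≤ e (k + 1)) ∧ 1 ≤ e (n - 2) ∧ 1 ≤ e (n - 1) := by
  obtain ⟨m, rfl⟩ : ∃ m, n = m + 4 := ⟨n - 4, by omega⟩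
  simp only [show m + 4 - 4 = m by omega, show m + 4 - 3 = m + 1 by omega,
    show m + 4 - 2 = m + 2 by omega, show m + 4 - 1 = m + 3 by omega] at *
  -- Induction from the branch vertex towards the far end of the chain.
  have mono : ∀ t k, k + t = m → e k ≤ e (k + 1) := by
    intro t
    induction t with
    | zero => intro k hk; obtain rfl : k = m := by omega
              linarith
    | succ t ih =>
      intro k hk
      have h1 := ih (k + 1) (by omega)
      have h2 := hconc k (by omega)
      simp only [add_assoc, Nat.reduceAdd] at h1
      linarith
  -- Concavity and monotonicity: if the first step is zero, the chain is constant.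
  have const : e 1 ≤ e 0 → ∀ k, k ≤ m → e k = e 0 ∧ e (k + 1) = e 0 := by
    intro h k
    induction k with
    | zero => intro _; have := mono m 0 (by omega); simp only [zero_add] at *
              exact ⟨trivial, by linarith⟩
    | succ k ih =>
      intro hk
      obtain ⟨h1, h2⟩ := ih (by omega)
      have h3 := hconc k (by omega)
      have h4 := mono (m - (k + 1)) (k + 1) (by omega)
      simp only [add_assoc, Nat.reduceAdd] at *
      exact ⟨h2, by linarith⟩
  have p0 := hpos 0 (by omega)
  have p2 := hpos (m + 2) (by omega)
  have p3 := hpos (m + 3) (by omega)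
  have e0 : 1 ≤ e 0 := by
    by_contra hlt
    have hz : e 0 = 0 := by omega
    have hc := const (by omega)
    have hm := hc m le_rfl
    obtain ⟨k, hk, hk0⟩ := hne
    apply hk0
    rcases (by omega : k ≤ m ∨ k = m + 1 ∨ k = m + 2 ∨ k = m + 3) with h | rfl | rfl | rfl
    · have := hc k h
      omega
    all_goals omega
  have e1 : 2 ≤ e 1 := by
    by_contra hlt
    have h01 := mono m 0 (by omega)
    simp only [zero_add] at h01
    have hm := const (by omega) m le_rfl
    omega
  have chain : ∀ k, k ≤ m → 2 ≤ e (k + 1) := by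
    intro k
    induction k with
    | zero => intro _; simpa using e1
    | succ k ih =>
      intro hk
      exact (ih (by omega)).trans (mono (m - (k + 1)) (k + 1) (by omega))
  have hm := chain m le_rfl
  exact ⟨e0, fun k hk => chain k (by omega), by omega, by omega⟩

/-- the vector `(1,2,2,…,2,1,1)` is the fundamental cycle of `D_n`: it
pairs nonpositively with the intersection matrix `M`, and every nonzero nonnegative
integer vector pairing nonpositively with `M` dominates it componentwise. -/
theorem dn_fundamental_cycle (n : ℕ) (hn : 4 ≤ n) :
    (∀ i, (DnMatrix n).mulVec (DnFundCycle n) i ≤ 0) ∧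
    (∀ d : Fin n → ℤ, d ≠ 0 → (∀ i, 0 ≤ d i) →
      (∀ i, (DnMatrix n).mulVec d i ≤ 0) → ∀ i, DnFundCycle n i ≤ d i) := by
  constructor
  · intro i
    have h := DnMatrix_mulVec n hn
      (fun j => if j + 1 = 1 ∨ j + 1 = n - 1 ∨ j + 1 = n then 1 else 2) i
    change (DnMatrix n).mulVec (DnFundCycle n) i = _ at h
    rw [h]
    have hi := i.isLt
    split_ifs <;> omega
  · intro d hd hpos hM i
    set e : ℕ → ℤ := fun k => if h : k < n then d ⟨k, h⟩ else 0 with he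
    have hde : d = fun j : Fin n => e j := by
      funext j
      simp [he]
    have row (k : ℕ) (hk : k < n) := (DnMatrix_mulVec n hn e ⟨k, hk⟩).symm.trans_le
      (hde ▸ hM ⟨k, hk⟩)
    dsimp only at row
    have hpos' : ∀ k < n, 0 ≤ e k := fun k hk => by simpa [he, hk] using hpos ⟨k, hk⟩
    have hne : ∃ k < n, e k ≠ 0 := by
      obtain ⟨j, hj⟩ := Function.ne_iff.mp hd
      exact ⟨j, j.isLt, by simpa [he] using hj⟩
    clear_value e
    obtain ⟨b0, bchain, b2, b1⟩ := Dn_lower_bound n hn e hne hpos'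
      (by
        have h := row 0 (by omega)
        rw [if_neg (by omega), if_pos (by omega), if_neg (by omega), if_neg (by omega)] at h
        simp only [zero_add] at h
        linarith)
      (fun k hk => by
        have h := row (k + 1) (by omega)
        rw [if_pos (by omega), if_pos (by omega), if_neg (by omega), if_neg (by omega)] at h
        simp only [Nat.add_sub_cancel, add_assoc, Nat.reduceAdd] at h
        linarith)
      (by
        have h := row (n - 3) (by omega)
        rw [if_pos (by omega), if_pos (by omega), if_neg (by omega), if_pos (by omega),
          show n - 3 - 1 = n - 4 by omega, show n - 3 + 1 = n - 2 by omega] at h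
        linarith)
      (by
        have h := row (n - 2) (by omega)
        rw [if_pos (by omega), if_neg (by omega), if_neg (by omega), if_neg (by omega),
          show n - 2 - 1 = n - 3 by omega] at h
        linarith)
      (by
        have h := row (n - 1) (by omega)
        rw [if_neg (by omega), if_neg (by omega), if_pos (by omega), if_neg (by omega)] at h
        linarith)
    rw [hde]
    obtain ⟨k, hk⟩ := i
    simp only [DnFundCycle]
    rcases (by omega : k = 0 ∨ k = n - 2 ∨ k = n - 1 ∨ (1 ≤ k ∧ k ≤ n - 3))
      with rfl | rfl | rfl | ⟨h1, h2⟩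
    · simpa using b0
    · rw [if_pos (by omega)]
      exact b2
    · rw [if_pos (by omega)]
      exact b1
    · rw [if_neg (by omega)]
      have h := bchain (k - 1) (by omega)
      rwa [Nat.sub_add_cancel h1] at h
end
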